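/- arXiv:2108.10951 — 5 statements merged into one kernel-verified Lean document; each statement's English description precedes it below -/
import Mathlib

section
/- Let d ≥ 1, n ≥ d+1 and β > −1 be fixed, and let U_1, U_2, … be i.i.d. random points in ℝ^d with the d-dimensional beta distribution with parameter β. Then, as N → ∞, the maximal volume max_{1≤i_1<…<i_n≤N} vol_d([U_{i_1},…,U_{i_n}]) converges in probability to max_{x_1,…,x_n ∈ B^d} vol_d([x_1,…,x_n]), the maximal d-dimensional volume of the convex hull of n points of the closed unit ball B^d. -/
/-!
Almost surely all points lie in the closed unit ball, so the maximal volume over the sample never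
exceeds the maximum over the ball. Conversely, fix `n` points `x_1, …, x_n` of the ball whose hull
has volume within `δ / 2` of the maximum. The volume of the hull is lower semicontinuous in its
vertices (`hullVol_lower_semicontinuous`): if the hull contains a ball of radius `r` about `c`,
moving each vertex by at most `t r` leaves the copy of the hull shrunk towards `c` by the factor
`1 - t` covered (`homothety_subset_convexHull`). Hence there is `ε > 0` such that the sample does
at least as well as the maximum minus `δ` as soon as it has a point in each of the `n` balls
`B(x_k, ε)`; one sample point may serve several balls, since completing a selection to `n`
distinct indices only enlarges the hull (`hullVol_comp_le_maxVol`). Each of these balls has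
positive probability (`betaMeasureD_ball_pos`), so it is missed by `N` independent points with
probability `(1 - p_k) ^ N → 0`, and a union bound over `k` finishes the proof.

The argument uses that the beta distribution has total mass one
(`isProbabilityMeasure_betaMeasureD`), which is a computation in polar coordinates reducing to the
one-dimensional beta integral.
-/


open MeasureTheory Real Filter Topology

noncomputable section

/-- The beta distribution with parameter `β > -1` on `ℝ^d`: the measure with Lebesgue
density `c_{d,β} (1-‖x‖²)^β` on the unit ball, where
`c_{d,β} = Γ(d/2+1+β)/(π^{d/2} Γ(β+1))`. -/
def betaMeasureD (d : ℕ) (β : ℝ) : Measure (EuclideanSpace ℝ (Fin d)) :=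
  volume.withDensity fun x =>
    ENNReal.ofReal (if ‖x‖ ≤ 1 then
      (Real.Gamma ((d : ℝ) / 2 + 1 + β) / (π ^ ((d : ℝ) / 2) * Real.Gamma (β + 1))) *
        (1 - ‖x‖ ^ 2) ^ β
      else 0)

/-- The `d`-dimensional volume of the convex hull of a finite family of points. -/
def hullVol {d m : ℕ} (x : Fin m → EuclideanSpace ℝ (Fin d)) : ℝ :=
  (volume (convexHull ℝ (Set.range x))).toReal

/-- The maximal volume among the convex hulls `[U_{i_1}, …, U_{i_n}]`,
`1 ≤ i_1 < … < i_n ≤ N`. -/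
def maxVol (d n N : ℕ) (U : Fin N → EuclideanSpace ℝ (Fin d)) : ℝ :=
  sSup {v : ℝ | ∃ ι : Fin n → Fin N, StrictMono ι ∧ v = hullVol (U ∘ ι)}

/-- The maximal volume of the convex hull of `n` points of the closed unit ball. -/
def maxVolBall (d n : ℕ) : ℝ :=
  sSup {v : ℝ | ∃ x : Fin n → EuclideanSpace ℝ (Fin d),
    (∀ i, ‖x i‖ ≤ 1) ∧ v = hullVol x}


/-! ### The beta distribution -/

/-- The normalizing constant `c_{d,β}` of the beta density. -/
def betaConst (d : ℕ) (β : ℝ) : ℝ :=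
  Real.Gamma ((d : ℝ) / 2 + 1 + β) / (π ^ ((d : ℝ) / 2) * Real.Gamma (β + 1))

/-- The radial profile of the beta density, so that the density at `x` is
`betaRadial d β ‖x‖`. -/
def betaRadial (d : ℕ) (β r : ℝ) : ℝ :=
  if r ≤ 1 then betaConst d β * (1 - r ^ 2) ^ β else 0

lemma betaConst_pos (d : ℕ) {β : ℝ} (hβ : -1 < β) : 0 < betaConst d β := by
  have hd : (0 : ℝ) ≤ d := Nat.cast_nonneg d
  have h1 : 0 < Real.Gamma ((d : ℝ) / 2 + 1 + β) := Real.Gamma_pos_of_pos (by linarith)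
  have h2 : 0 < Real.Gamma (β + 1) := Real.Gamma_pos_of_pos (by linarith)
  have h3 : 0 < π ^ ((d : ℝ) / 2) := Real.rpow_pos_of_pos Real.pi_pos _
  unfold betaConst
  positivity

lemma measurable_betaRadial (d : ℕ) (β : ℝ) : Measurable (betaRadial d β) :=
  Measurable.ite measurableSet_Iic (by fun_prop) (by fun_prop)

lemma betaRadial_nonneg (d : ℕ) {β : ℝ} (hβ : -1 < β) {r : ℝ} (hr : 0 ≤ r) :
    0 ≤ betaRadial d β r := by
  unfold betaRadial
  split_ifs with h
  · exact mul_nonneg (betaConst_pos d hβ).le (Real.rpow_nonneg (by nlinarith) _)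
  · exact le_rfl

lemma betaMeasureD_eq (d : ℕ) (β : ℝ) :
    betaMeasureD d β = volume.withDensity fun x => ENNReal.ofReal (betaRadial d β ‖x‖) := rfl

/-- The substitution `s = r²` turns the radial integral into a one-dimensional beta integral
with parameters `d/2` and `β + 1`. -/
lemma integral_betaRadial (d : ℕ) (hd : 1 ≤ d) {β : ℝ} (hβ : -1 < β) :
    ∫ r in Set.Ioi (0 : ℝ), r ^ (d - 1) * betaRadial d β r =
      ProbabilityTheory.beta ((d : ℝ) / 2) (β + 1) * betaConst d β / 2 := by
  have hd0 : (0 : ℝ) < d / 2 := by positivity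
  have hB := ProbabilityTheory.beta_pos hd0 (show 0 < β + 1 by linarith)
  have hC := betaConst_pos d hβ
  set B := ProbabilityTheory.beta ((d : ℝ) / 2) (β + 1) with hBdef
  have h1 : ∫ y in Set.Ioi (0 : ℝ), ProbabilityTheory.betaPDFReal ((d : ℝ) / 2) (β + 1) y = 1 := by
    rw [setIntegral_eq_integral_of_forall_compl_eq_zero]
    · rw [integral_eq_lintegral_of_nonneg_ae]
      · have := ProbabilityTheory.lintegral_betaPDF_eq_one hd0 (show 0 < β + 1 by linarith)
        unfold ProbabilityTheory.betaPDF at this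
        rw [this]; rfl
      · refine Eventually.of_forall fun x => ?_
        by_cases hx : 0 < x ∧ x < 1
        · exact (ProbabilityTheory.betaPDFReal_pos hx.1 hx.2 hd0 (by linarith)).le
        · simp [ProbabilityTheory.betaPDFReal, hx]
      · exact (ProbabilityTheory.measurable_betaPDFReal _ _).aestronglyMeasurable
    · intro x hx
      have : ¬ (0 < x ∧ x < 1) := fun h => hx h.1
      simp [ProbabilityTheory.betaPDFReal, this]
  rw [← integral_comp_rpow_Ioi_of_pos (p := 2) (by norm_num)] at h1
  have h2 : ∫ r in Set.Ioi (0 : ℝ), r ^ (d - 1) * betaRadial d β r =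
      ∫ r in Set.Ioi (0 : ℝ), (B * betaConst d β / 2) * (((2 : ℝ) * r ^ ((2 : ℝ) - 1)) •
        ProbabilityTheory.betaPDFReal ((d : ℝ) / 2) (β + 1) (r ^ (2 : ℝ))) := by
    refine setIntegral_congr_ae measurableSet_Ioi ?_
    have hne : ∀ᵐ r : ℝ, r ≠ 1 := by simp [ae_iff]
    filter_upwards [hne] with r hr1 (hr : 0 < r)
    unfold betaRadial ProbabilityTheory.betaPDFReal
    rw [← hBdef]
    rcases lt_or_gt_of_ne hr1 with h | h
    · have hs : r ^ (2 : ℝ) = r ^ 2 := by norm_num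
      have h3 : (r ^ (2 : ℝ)) ^ ((d : ℝ) / 2 - 1) * r = r ^ (d - 1) := by
        rw [← Real.rpow_mul hr.le]
        conv_lhs => rw [show ∀ a : ℝ, a * r = a * r ^ (1 : ℝ) by simp]
        rw [← Real.rpow_add hr, ← Real.rpow_natCast, Nat.cast_sub hd]
        congr 1
        push_cast
        ring
      have h4 : 0 < r ^ (2 : ℝ) ∧ r ^ (2 : ℝ) < 1 := by rw [hs]; constructor <;> nlinarith
      rw [if_pos h.le, if_pos h4, ← h3, hs]
      norm_num
      field_simp
    · have h4 : ¬ (0 < r ^ (2 : ℝ) ∧ r ^ (2 : ℝ) < 1) := by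
        have hs : r ^ (2 : ℝ) = r ^ 2 := by norm_num
        rw [hs]; intro h5; nlinarith [h5.2]
      rw [if_neg (by linarith), if_neg h4]
      simp
  rw [h2, integral_const_mul, h1, mul_one]

/-- The constant `c_{d,β}` normalizes the density: integrate in polar coordinates. -/
lemma integral_betaRadial_norm (d : ℕ) (hd : 1 ≤ d) {β : ℝ} (hβ : -1 < β) :
    ∫ x : EuclideanSpace ℝ (Fin d), betaRadial d β ‖x‖ = 1 := by
  have : NeZero d := ⟨by omega⟩
  have hd0 : (0 : ℝ) < d / 2 := by positivity
  rw [integral_fun_norm_addHaar]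
  simp only [finrank_euclideanSpace, Fintype.card_fin, smul_eq_mul, nsmul_eq_mul]
  rw [integral_betaRadial d hd hβ, Measure.real, EuclideanSpace.volume_ball]
  have hG := Real.Gamma_pos_of_pos hd0
  have hG1 : Real.Gamma ((d : ℝ) / 2 + 1) = (d / 2) * Real.Gamma (d / 2) :=
    Real.Gamma_add_one hd0.ne'
  have hG2 := Real.Gamma_pos_of_pos (show 0 < β + 1 by linarith)
  have hG3 := Real.Gamma_pos_of_pos (show 0 < (d : ℝ) / 2 + 1 + β by linarith)
  have hpi : √π ^ d = π ^ ((d : ℝ) / 2) := by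
    rw [Real.sqrt_eq_rpow, ← Real.rpow_natCast, ← Real.rpow_mul Real.pi_pos.le]
    congr 1; ring
  have hp : 0 < π ^ ((d : ℝ) / 2) := Real.rpow_pos_of_pos Real.pi_pos _
  simp only [Fintype.card_fin, ENNReal.ofReal_one, one_pow, one_mul]
  rw [ENNReal.toReal_ofReal (by positivity), hpi, hG1]
  unfold ProbabilityTheory.beta betaConst
  rw [show (d : ℝ) / 2 + (β + 1) = d / 2 + 1 + β by ring]
  have : (d : ℝ) ≠ 0 := by positivity
  set G := Real.Gamma ((d : ℝ) / 2 + 1 + β)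
  field_simp

lemma isProbabilityMeasure_betaMeasureD (d : ℕ) (hd : 1 ≤ d) {β : ℝ} (hβ : -1 < β) :
    IsProbabilityMeasure (betaMeasureD d β) := by
  have h1 := integral_betaRadial_norm d hd hβ
  -- a nonzero Bochner integral can only come from an integrable function
  have hint : Integrable fun x : EuclideanSpace ℝ (Fin d) => betaRadial d β ‖x‖ := by
    by_contra h
    rw [integral_undef h] at h1
    exact zero_ne_one h1
  constructor
  rw [betaMeasureD_eq, withDensity_apply _ MeasurableSet.univ, Measure.restrict_univ,
    ← ofReal_integral_eq_lintegral_ofReal hint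
      (Eventually.of_forall fun x => betaRadial_nonneg d hβ (norm_nonneg x)), h1]
  simp

lemma ae_betaMeasureD_norm_le (d : ℕ) (β : ℝ) : ∀ᵐ x ∂betaMeasureD d β, ‖x‖ ≤ 1 := by
  rw [betaMeasureD_eq, ae_withDensity_iff (by have := measurable_betaRadial d β; fun_prop)]
  refine Eventually.of_forall fun x hx => ?_
  by_contra h
  exact hx (by simp [betaRadial, h])

/-- Every point of the closed unit ball belongs to the support of the beta distribution. -/
lemma betaMeasureD_ball_pos (d : ℕ) {β : ℝ} (hβ : -1 < β) {x : EuclideanSpace ℝ (Fin d)}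
    (hx : ‖x‖ ≤ 1) {ε : ℝ} (hε : 0 < ε) : 0 < betaMeasureD d β (Metric.ball x ε) := by
  have hopen : IsOpen (Metric.ball x ε ∩ Metric.ball 0 1) :=
    Metric.isOpen_ball.inter Metric.isOpen_ball
  have hne : (Metric.ball x ε ∩ Metric.ball 0 1).Nonempty := by
    have hcl : x ∈ closure (Metric.ball (0 : EuclideanSpace ℝ (Fin d)) 1) := by
      rw [closure_ball _ one_ne_zero]; simpa using hx
    exact mem_closure_iff.1 hcl _ Metric.isOpen_ball (Metric.mem_ball_self hε)
  rw [pos_iff_ne_zero]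
  intro h0
  have h1 : betaMeasureD d β (Metric.ball x ε ∩ Metric.ball 0 1) = 0 :=
    measure_mono_null Set.inter_subset_left h0
  rw [betaMeasureD_eq, withDensity_apply_eq_zero
    (by have := measurable_betaRadial d β; fun_prop)] at h1
  refine (hopen.measure_pos volume hne).ne' (measure_mono_null (fun y hy => Set.mem_inter ?_ hy) h1)
  have hy1 : ‖y‖ < 1 := by simpa using hy.2
  have : 0 < betaRadial d β ‖y‖ := by
    rw [betaRadial, if_pos hy1.le]
    exact mul_pos (betaConst_pos d hβ)
      (Real.rpow_pos_of_pos (by nlinarith [norm_nonneg y]) _)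
  simpa [Set.mem_ofPred_eq] using this

/-! ### Volumes of convex hulls -/

lemma isCompact_convexHull_range {d m : ℕ} (x : Fin m → EuclideanSpace ℝ (Fin d)) :
    IsCompact (convexHull ℝ (Set.range x)) :=
  (Set.finite_range x).isCompact_convexHull (𝕜 := ℝ)

lemma hullVol_nonneg {d m : ℕ} (x : Fin m → EuclideanSpace ℝ (Fin d)) : 0 ≤ hullVol x :=
  ENNReal.toReal_nonneg

lemma hullVol_mono {d m k : ℕ} {x : Fin m → EuclideanSpace ℝ (Fin d)}
    {y : Fin k → EuclideanSpace ℝ (Fin d)} (h : Set.range x ⊆ Set.range y) :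
    hullVol x ≤ hullVol y :=
  ENNReal.toReal_mono (isCompact_convexHull_range y).measure_lt_top.ne
    (measure_mono (convexHull_mono h))

/-- If the hull of `x` contains the ball of radius `r` about `c`, then moving each vertex by at
most `t * r` cannot uncover the hull shrunk towards `c` by the factor `1 - t`: a hyperplane
separating a shrunk point from the moved hull would, after being pushed outwards by `t * r`,
still meet the hull of `x`. -/
lemma homothety_subset_convexHull {d m : ℕ} {x y : Fin m → EuclideanSpace ℝ (Fin d)}
    {c : EuclideanSpace ℝ (Fin d)} {r t : ℝ} (hr : 0 < r) (ht0 : 0 < t) (ht1 : t < 1)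
    (hc : Metric.closedBall c r ⊆ convexHull ℝ (Set.range x))
    (hxy : ∀ i, dist (y i) (x i) ≤ t * r) :
    AffineMap.homothety c (1 - t) '' convexHull ℝ (Set.range x) ⊆
      convexHull ℝ (Set.range y) := by
  rintro _ ⟨k, hk, rfl⟩
  set z := AffineMap.homothety c (1 - t) k with hz
  by_contra hzn
  obtain ⟨f, u, hfu, hfz⟩ := geometric_hahn_banach_closed_point (convex_convexHull ℝ _)
    (isCompact_convexHull_range y).isClosed hzn
  have hf0 : f ≠ 0 := by
    rintro rfl
    obtain ⟨_, ⟨i, rfl⟩⟩ : (Set.range x).Nonempty := convexHull_nonempty_iff.1 ⟨k, hk⟩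
    have := hfu _ (subset_convexHull ℝ _ (Set.mem_range_self i))
    simp at this hfz
    linarith
  set v := (InnerProductSpace.toDual ℝ (EuclideanSpace ℝ (Fin d))).symm f with hv
  have hfv : ∀ w, f w = inner ℝ v w := fun w => by
    rw [hv, InnerProductSpace.toDual_symm_apply]
  have hv0 : 0 < ‖v‖ := by
    rw [norm_pos_iff]
    intro h
    exact hf0 (by ext w; rw [hfv, h]; simp)
  -- the hull of `x` lies in the half-space `f < u + t r ‖v‖`
  have hK : ∀ w ∈ convexHull ℝ (Set.range x), f w < u + t * r * ‖v‖ := by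
    have hconv : Convex ℝ {w | f w < u + t * r * ‖v‖} :=
      convex_halfSpace_lt f.toLinearMap.isLinear _
    refine convexHull_min ?_ hconv
    rintro _ ⟨i, rfl⟩
    have h1 := hfu _ (subset_convexHull ℝ _ (Set.mem_range_self i))
    have h2 : f (x i) - f (y i) ≤ t * r * ‖v‖ := by
      rw [← map_sub, hfv]
      calc inner ℝ v (x i - y i) ≤ ‖v‖ * ‖x i - y i‖ := real_inner_le_norm _ _
        _ ≤ ‖v‖ * (t * r) := by
          gcongr
          rw [← dist_eq_norm, dist_comm]; exact hxy i
        _ = t * r * ‖v‖ := by ring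
    show f (x i) < _
    linarith
  -- the point of the hull of `x` at distance `t r` from `z` in the direction of `v`
  have hb : c + (r / ‖v‖) • v ∈ convexHull ℝ (Set.range x) := by
    apply hc
    rw [Metric.mem_closedBall, dist_eq_norm, add_sub_cancel_left, norm_smul, norm_div, norm_norm,
      Real.norm_of_nonneg hr.le]
    field_simp; exact le_rfl
  have hq := convex_convexHull ℝ (Set.range x) hk hb (show 0 ≤ 1 - t by linarith) ht0.le
    (by ring)
  have h3 := hK _ hq
  have hvv : f v = ‖v‖ ^ 2 := by rw [hfv, real_inner_self_eq_norm_sq]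
  have hzval : f z = (1 - t) * (f k - f c) + f c := by
    rw [hz, AffineMap.homothety_apply]
    simp
  rw [map_add, map_smul, map_smul, map_add, map_smul, hvv] at h3
  simp only [smul_eq_mul] at h3
  have h4 : r / ‖v‖ * ‖v‖ ^ 2 = r * ‖v‖ := by field_simp
  rw [h4] at h3
  nlinarith

/-- Lower semicontinuity of the volume of the convex hull. -/
lemma hullVol_lower_semicontinuous {d m : ℕ} (x : Fin m → EuclideanSpace ℝ (Fin d)) {η : ℝ}
    (hη : 0 < η) : ∃ ε > 0, ∀ y : Fin m → EuclideanSpace ℝ (Fin d),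
      (∀ i, dist (y i) (x i) < ε) → hullVol x - η < hullVol y := by
  set K := convexHull ℝ (Set.range x) with hKdef
  rcases (interior K).eq_empty_or_nonempty with hemp | ⟨c, hcK⟩
  · refine ⟨1, one_pos, fun y _ => ?_⟩
    have h0 : hullVol x = 0 := by
      have hle : volume K ≤ volume (frontier K) := by
        refine measure_mono fun w hw => ?_
        rw [frontier, hemp, Set.sdiff_empty]
        exact subset_closure hw
      rw [(convex_convexHull ℝ _).addHaar_frontier volume] at hle
      simp [hullVol, ← hKdef, nonpos_iff_eq_zero.1 hle]
    linarith [hullVol_nonneg y]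
  · obtain ⟨r, hr, hball⟩ := Metric.nhds_basis_closedBall.mem_iff.1 (mem_interior_iff_mem_nhds.1 hcK)
    have hcont : Tendsto (fun t : ℝ => (1 - t) ^ d * hullVol x) (𝓝[>] 0) (𝓝 (hullVol x)) := by
      have h : Continuous fun t : ℝ => (1 - t) ^ d * hullVol x := by fun_prop
      simpa using (h.tendsto 0).mono_left nhdsWithin_le_nhds
    have hev := (hcont.eventually (lt_mem_nhds (show hullVol x - η < hullVol x by linarith))).and
      (Ioo_mem_nhdsGT (show (0 : ℝ) < 1 by norm_num))
    obtain ⟨t, ht, ht0, ht1⟩ := hev.exists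
    refine ⟨t * r, by positivity, fun y hy => ht.trans_le ?_⟩
    have hsub := homothety_subset_convexHull hr ht0 ht1 hball fun i => (hy i).le
    have := ENNReal.toReal_mono (isCompact_convexHull_range y).measure_lt_top.ne
      (measure_mono (μ := volume) hsub)
    rw [Measure.addHaar_image_homothety, ENNReal.toReal_mul, ENNReal.toReal_ofReal (abs_nonneg _),
      finrank_euclideanSpace, Fintype.card_fin, abs_of_pos (pow_pos (by linarith) _)] at this
    exact this

lemma hullVol_le_ball {d m : ℕ} {x : Fin m → EuclideanSpace ℝ (Fin d)} (hx : ∀ i, ‖x i‖ ≤ 1) :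
    hullVol x ≤ (volume (Metric.closedBall (0 : EuclideanSpace ℝ (Fin d)) 1)).toReal := by
  refine ENNReal.toReal_mono measure_closedBall_lt_top.ne (measure_mono ?_)
  refine convexHull_min ?_ (convex_closedBall _ _)
  rintro _ ⟨i, rfl⟩
  simpa using hx i

lemma hullVol_le_maxVolBall {d n : ℕ} {x : Fin n → EuclideanSpace ℝ (Fin d)}
    (hx : ∀ i, ‖x i‖ ≤ 1) : hullVol x ≤ maxVolBall d n := by
  refine le_csSup
    ⟨(volume (Metric.closedBall (0 : EuclideanSpace ℝ (Fin d)) 1)).toReal, ?_⟩ ⟨x, hx, rfl⟩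
  rintro _ ⟨y, hy, rfl⟩
  exact hullVol_le_ball hy

lemma maxVol_le_maxVolBall {d n N : ℕ} {U : Fin N → EuclideanSpace ℝ (Fin d)}
    (hU : ∀ i, ‖U i‖ ≤ 1) : maxVol d n N U ≤ maxVolBall d n := by
  refine Real.sSup_le ?_ ((hullVol_nonneg _).trans
    (hullVol_le_maxVolBall (x := fun _ : Fin n => 0) (by simp)))
  rintro _ ⟨ι, -, rfl⟩
  exact hullVol_le_maxVolBall fun i => hU _

/-- The indices selecting the points need not be increasing, nor even distinct: the hull only
grows when repeated indices are replaced by new ones. -/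
lemma hullVol_comp_le_maxVol {d n N : ℕ} (hN : n ≤ N) (U : Fin N → EuclideanSpace ℝ (Fin d))
    (s : Fin n → Fin N) : hullVol (U ∘ s) ≤ maxVol d n N U := by
  classical
  obtain ⟨T, hsT, hT⟩ := Finset.exists_superset_card_eq (s := Finset.univ.image s) (n := n)
    (by simpa using Finset.card_image_le (s := Finset.univ) (f := s)) (by simpa using hN)
  have hle : hullVol (U ∘ s) ≤ hullVol (U ∘ T.orderEmbOfFin hT) := by
    refine hullVol_mono ?_
    rintro _ ⟨i, rfl⟩
    have : s i ∈ Set.range (T.orderEmbOfFin hT) := by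
      rw [Finset.range_orderEmbOfFin]
      exact hsT (Finset.mem_image_of_mem _ (Finset.mem_univ _))
    obtain ⟨j, hj⟩ := this
    exact ⟨j, by simp [hj]⟩
  refine hle.trans (le_csSup ?_ ⟨_, (T.orderEmbOfFin hT).strictMono, rfl⟩)
  refine ⟨hullVol U, ?_⟩
  rintro _ ⟨ι, -, rfl⟩
  exact hullVol_mono (Set.range_comp_subset_range _ _)

/-! ### Convergence in probability -/

/-- A fixed set of positive probability is missed by all of `N` independent points with
probability tending to zero. -/
lemma tendsto_pi_miss {E : Type*} [MeasurableSpace E] (μ : Measure E) [IsProbabilityMeasure μ]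
    {A : Set E} (hA : MeasurableSet A) (hpos : 0 < μ A) :
    Tendsto (fun N : ℕ => (Measure.pi fun _ : Fin N => μ) {U | ∀ i, U i ∉ A}) atTop (𝓝 0) := by
  have hlt : μ Aᶜ < 1 := by
    rw [prob_compl_eq_one_sub hA]
    exact ENNReal.sub_lt_self ENNReal.one_ne_top one_ne_zero hpos.ne'
  refine (ENNReal.tendsto_pow_atTop_nhds_zero_of_lt_one hlt).congr fun N => ?_
  have : {U : Fin N → E | ∀ i, U i ∉ A} = Set.univ.pi fun _ => Aᶜ := by ext; simp
  rw [this, Measure.pi_pi]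
  simp

/-- As `N → ∞`, the maximal volume of a beta polytope on `n` out of `N` points converges
in probability to the maximal volume of the convex hull of `n` points of the unit ball. -/
theorem stmt2 (d n : ℕ) (hd : 1 ≤ d) (hn : d + 1 ≤ n) (β : ℝ) (hβ : -1 < β) :
    ∀ δ : ℝ, 0 < δ →
      Tendsto
        (fun N : ℕ =>
          ((Measure.pi fun _ : Fin N => betaMeasureD d β)
              {U : Fin N → EuclideanSpace ℝ (Fin d) |
                δ < |maxVolBall d n - maxVol d n N U|}).toReal)
        atTop (𝓝 0) := by
  intro δ hδ
  have := isProbabilityMeasure_betaMeasureD d hd hβ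
  obtain ⟨_, ⟨x, hx, rfl⟩, hxmax⟩ := exists_lt_of_lt_csSup
    (s := {v : ℝ | ∃ x : Fin n → EuclideanSpace ℝ (Fin d), (∀ i, ‖x i‖ ≤ 1) ∧ v = hullVol x})
    (b := maxVolBall d n - δ / 2) ⟨_, fun _ => 0, by simp, rfl⟩
    (show maxVolBall d n - δ / 2 < maxVolBall d n by linarith)
  obtain ⟨ε, hε, hεy⟩ := hullVol_lower_semicontinuous x (half_pos hδ)
  have hmiss : Tendsto (fun N : ℕ => ∑ k : Fin n, (Measure.pi fun _ : Fin N => betaMeasureD d β)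
      {U | ∀ i, U i ∉ Metric.ball (x k) ε}) atTop (𝓝 0) := by
    simpa using tendsto_finsetSum Finset.univ fun k _ =>
      tendsto_pi_miss (betaMeasureD d β) (Metric.isOpen_ball (x := x k) (ε := ε)).measurableSet
        (betaMeasureD_ball_pos d hβ (hx k) hε)
  rw [← ENNReal.toReal_zero]
  refine (ENNReal.tendsto_toReal ENNReal.zero_ne_top).comp
    (tendsto_of_tendsto_of_tendsto_of_le_of_le' tendsto_const_nhds hmiss
      (Eventually.of_forall fun _ => zero_le) ?_)
  filter_upwards [eventually_ge_atTop n] with N hN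
  have hball : ∀ᵐ U ∂(Measure.pi fun _ : Fin N => betaMeasureD d β), ∀ i, ‖U i‖ ≤ 1 :=
    eventually_all.2 fun i =>
      (Measure.tendsto_eval_ae_ae (μ := fun _ : Fin N => betaMeasureD d β) (i := i)).eventually
        (ae_betaMeasureD_norm_le d β)
  refine le_trans (measure_mono_ae ?_) (measure_iUnion_fintype_le _ _)
  filter_upwards [hball] with U hU (hUδ : δ < _)
  show U ∈ ⋃ k, _
  by_contra hcon
  simp only [Set.mem_iUnion, Set.mem_ofPred_eq, not_exists, not_forall, not_not] at hcon
  choose s hs using hcon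
  have h1 := hεy (U ∘ s) fun k => hs k
  have h2 := hullVol_comp_le_maxVol hN U s
  have h3 := maxVol_le_maxVolBall (n := n) hU
  rw [abs_of_nonneg (by linarith)] at hUδ
  linarith
end
end

section
/- Let n ≥ 1, β > −1, let a_1,…,a_n > 0, let B be a symmetric positive definite real (n−1)×(n−1) matrix, and let ε > 0. Then ∫_{ℝ^{n−1}} ∫_{[0,∞)^n} 1{ Σ_{j=1}^n a_j ρ_j + ⟨Bα,α⟩ ≤ ε } · Π_{j=1}^n ρ_j^β dρ_1…dρ_n dα = ( π^{(n−1)/2} · (Γ(β+1))^n / ( Γ((β+3/2)n+1/2) · √(det B) ) ) · Π_{j=1}^n a_j^{−β−1} · ε^{(β+3/2)n−1/2}. -/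
/-!
The function `H (α, ρ) = ∑ a_j ρ_j + ⟨Bα, α⟩` becomes `t H` under `(α, ρ) ↦ (√t α, t ρ)`, and the
measure `∏ ρ_j ^ β dρ dα` on `ρ ≥ 0` is multiplied by `t ^ s` with `s = m / 2 + (β + 1) n` (here
`m = n - 1`). Hence the mass `F t` of `{H ≤ t}` is `t ^ s * F 1` for `t > 0`
(`sublevelMass_scaling`), and only the constant `F 1` has to be found.

It is found by integrating `exp (-H)` in two ways. Writing `exp (-H) = ∫_{t ≥ H} exp (-t) dt` and
exchanging integrals gives `∫ exp (-t) F t dt = Γ (s + 1) * F 1` (`laplace_layer`). On the other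
hand `exp (-H)` is a product of a Gaussian in `α` and one exponential in each `ρ_j`, so the same
integral is `π ^ (m / 2) / √(det B) * ∏ Γ (β + 1) a_j ^ (-β - 1)` (`laplace_product`).

Integrals are exchanged as lower Lebesgue integrals, so that Tonelli needs measurability only.
-/

open MeasureTheory Real Filter Topology Matrix

noncomputable section

/-! ### The weight, the functional and the sublevel mass -/

/-- The one-dimensional weight `x ^ β` on `[0, ∞)`, extended by zero. -/
def wt (β x : ℝ) : ℝ := (Set.Ici (0 : ℝ)).indicator (fun x => x ^ β) x

/-- The product weight `∏ ρ_j ^ β` on the closed orthant, extended by zero. -/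
def prodWt {n : ℕ} (β : ℝ) (ρ : Fin n → ℝ) : ℝ := ∏ j, wt β (ρ j)

/-- The functional `∑ a_j ρ_j + ⟨Bα, α⟩`. -/
def energy {m n : ℕ} (a : Fin n → ℝ) (B : Matrix (Fin m) (Fin m) ℝ)
    (α : Fin m → ℝ) (ρ : Fin n → ℝ) : ℝ := (∑ j, a j * ρ j) + α ⬝ᵥ B.mulVec α

/-- The mass of the sublevel set `{energy ≤ t}` with respect to `prodWt β ρ dρ dα`. -/
def sublevelMass {m n : ℕ} (β : ℝ) (a : Fin n → ℝ) (B : Matrix (Fin m) (Fin m) ℝ)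
    (t : ℝ) : ENNReal :=
  ∫⁻ α : Fin m → ℝ, ∫⁻ ρ : Fin n → ℝ,
    if energy a B α ρ ≤ t then ENNReal.ofReal (prodWt β ρ) else 0

lemma wt_nonneg (β x : ℝ) : 0 ≤ wt β x :=
  Set.indicator_nonneg (fun _ hx => Real.rpow_nonneg hx _) _

lemma prodWt_nonneg {n : ℕ} (β : ℝ) (ρ : Fin n → ℝ) : 0 ≤ prodWt β ρ :=
  Finset.prod_nonneg fun _ _ => wt_nonneg _ _

lemma measurable_wt (β : ℝ) : Measurable (wt β) :=
  (measurable_id.pow_const β).indicator measurableSet_Ici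

lemma measurable_prodWt {n : ℕ} (β : ℝ) : Measurable (prodWt (n := n) β) :=
  Finset.measurable_fun_prod _ fun j _ => (measurable_wt β).comp (measurable_pi_apply j)

lemma measurable_energy {m n : ℕ} (a : Fin n → ℝ) (B : Matrix (Fin m) (Fin m) ℝ) :
    Measurable fun p : (Fin m → ℝ) × (Fin n → ℝ) => energy a B p.1 p.2 := by
  unfold energy
  refine Continuous.measurable ?_
  have h : Continuous fun p : (Fin m → ℝ) × (Fin n → ℝ) => p.1 ⬝ᵥ B.mulVec p.1 :=
    continuous_fst.dotProduct (continuous_const.matrix_mulVec continuous_fst)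
  fun_prop

/-! ### Homogeneity -/

lemma wt_smul (β : ℝ) {t : ℝ} (ht : 0 < t) (x : ℝ) : wt β (t * x) = t ^ β * wt β x := by
  unfold wt
  by_cases hx : 0 ≤ x
  · rw [Set.indicator_of_mem (Set.mem_Ici.2 hx),
      Set.indicator_of_mem (Set.mem_Ici.2 (by positivity)), Real.mul_rpow ht.le hx]
  · have : ¬ 0 ≤ t * x := by
      rw [not_le] at hx ⊢
      exact mul_neg_of_pos_of_neg ht hx
    rw [Set.indicator_of_notMem (s := Set.Ici (0 : ℝ)) this,
      Set.indicator_of_notMem (s := Set.Ici (0 : ℝ)) hx, mul_zero]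

lemma prodWt_smul {n : ℕ} (β : ℝ) {t : ℝ} (ht : 0 < t) (ρ : Fin n → ℝ) :
    prodWt β (t • ρ) = t ^ (β * n) * prodWt β ρ := by
  unfold prodWt
  simp only [Pi.smul_apply, smul_eq_mul, wt_smul β ht, Finset.prod_mul_distrib, Finset.prod_const,
    Finset.card_univ, Fintype.card_fin]
  rw [Real.rpow_mul ht.le, Real.rpow_natCast]

lemma energy_smul {m n : ℕ} (a : Fin n → ℝ) (B : Matrix (Fin m) (Fin m) ℝ) {t : ℝ} (ht : 0 < t)
    (α : Fin m → ℝ) (ρ : Fin n → ℝ) :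
    energy a B (√t • α) (t • ρ) = t * energy a B α ρ := by
  unfold energy
  rw [Matrix.mulVec_smul, smul_dotProduct, dotProduct_smul, smul_smul, Real.mul_self_sqrt ht.le,
    mul_add, Finset.mul_sum]
  simp only [Pi.smul_apply, smul_eq_mul]
  congr 1
  exact Finset.sum_congr rfl fun j _ => by ring

lemma lintegral_smul_pi {k : ℕ} {r : ℝ} (hr : 0 < r) (f : (Fin k → ℝ) → ENNReal) :
    ∫⁻ x, f x = ENNReal.ofReal (r ^ k) * ∫⁻ x, f (r • x) := by
  have h := Measure.map_addHaar_smul (volume : Measure (Fin k → ℝ)) hr.ne'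
  have h2 : ∫⁻ x, f (r • x) = ∫⁻ x, f x ∂(Measure.map (r • ·) volume) :=
    ((Homeomorph.smulOfNeZero r hr.ne').measurableEmbedding.lintegral_map f).symm
  rw [h2, h, lintegral_smul_measure, smul_eq_mul, ← mul_assoc,
    ← ENNReal.ofReal_mul (by positivity), Module.finrank_fin_fun, abs_of_pos (by positivity),
    mul_inv_cancel₀ (by positivity), ENNReal.ofReal_one, one_mul]

lemma sublevelMass_scaling {m n : ℕ} (β : ℝ) (a : Fin n → ℝ) (B : Matrix (Fin m) (Fin m) ℝ)
    {t : ℝ} (ht : 0 < t) :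
    sublevelMass β a B t =
      ENNReal.ofReal (t ^ ((m : ℝ) / 2 + (β + 1) * n)) * sublevelMass β a B 1 := by
  have hs : 0 < √t := Real.sqrt_pos.2 ht
  unfold sublevelMass
  rw [lintegral_smul_pi hs]
  have h1 : ∀ α : Fin m → ℝ, (∫⁻ ρ : Fin n → ℝ,
      if energy a B (√t • α) ρ ≤ t then ENNReal.ofReal (prodWt β ρ) else 0) =
      ENNReal.ofReal (t ^ n * t ^ (β * n)) * ∫⁻ ρ : Fin n → ℝ,
        if energy a B α ρ ≤ 1 then ENNReal.ofReal (prodWt β ρ) else 0 := by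
    intro α
    rw [lintegral_smul_pi ht, ENNReal.ofReal_mul (by positivity), mul_assoc]
    congr 1
    rw [← lintegral_const_mul' _ _ ENNReal.ofReal_ne_top]
    refine lintegral_congr fun ρ => ?_
    rw [energy_smul a B ht, prodWt_smul β ht, ENNReal.ofReal_mul (by positivity), mul_ite, mul_zero]
    have : t * energy a B α ρ ≤ t ↔ energy a B α ρ ≤ 1 := by
      rw [mul_le_iff_le_one_right ht]
    simp only [this]
  simp only [h1]
  rw [lintegral_const_mul' _ _ ENNReal.ofReal_ne_top, ← mul_assoc,
    ← ENNReal.ofReal_mul (by positivity)]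
  congr 2
  rw [Real.sqrt_eq_rpow, ← Real.rpow_natCast, ← Real.rpow_natCast, ← Real.rpow_mul ht.le,
    ← Real.rpow_add ht, ← Real.rpow_add ht]
  congr 1
  ring

/-! ### The Laplace transform through the sublevel sets -/

/-- The layer-cake form of the exponential; no sign condition on `h` is needed since the
integral runs over all `t ≥ h`. -/
lemma ofReal_exp_neg_eq (h : ℝ) :
    ENNReal.ofReal (rexp (-h)) = ∫⁻ t : ℝ, if h ≤ t then ENNReal.ofReal (rexp (-t)) else 0 := by
  have h1 : (∫⁻ t : ℝ, if h ≤ t then ENNReal.ofReal (rexp (-t)) else 0) =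
      ∫⁻ t in Set.Ici h, ENNReal.ofReal (rexp (-t)) := by
    rw [← lintegral_indicator measurableSet_Ici]
    rfl
  rw [h1, setLIntegral_congr Ioi_ae_eq_Ici.symm, ← integral_exp_neg_Ioi,
    ofReal_integral_eq_lintegral_ofReal (integrableOn_exp_neg_Ioi h)
      (ae_of_all _ fun _ => (Real.exp_pos _).le)]

lemma integrableOn_rpow_mul_exp {s r : ℝ} (hs : 0 < s) (hr : 0 < r) :
    IntegrableOn (fun t : ℝ => t ^ (s - 1) * rexp (-(r * t))) (Set.Ioi 0) := by
  refine Integrable.of_integral_ne_zero ?_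
  rw [Real.integral_rpow_mul_exp_neg_mul_Ioi hs hr]
  have := Real.Gamma_pos_of_pos hs
  positivity

/-- The sublevel sets for `t < 0` are null for the weight, because `energy ≥ 0` where the weight
does not vanish. -/
lemma sublevelMass_neg {m n : ℕ} (β : ℝ) (a : Fin n → ℝ) (ha : ∀ j, 0 < a j)
    (B : Matrix (Fin m) (Fin m) ℝ) (hB : B.PosDef) {t : ℝ} (ht : t < 0) :
    sublevelMass β a B t = 0 := by
  unfold sublevelMass
  have h : ∀ (α : Fin m → ℝ) (ρ : Fin n → ℝ),
      (if energy a B α ρ ≤ t then ENNReal.ofReal (prodWt β ρ) else 0) = 0 := by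
    intro α ρ
    by_cases hρ : ∀ j, 0 ≤ ρ j
    · rw [if_neg]
      have h1 : 0 ≤ α ⬝ᵥ B.mulVec α := by
        simpa using hB.posSemidef.dotProduct_mulVec_nonneg α
      have h2 : 0 ≤ ∑ j, a j * ρ j :=
        Finset.sum_nonneg fun j _ => mul_nonneg (ha j).le (hρ j)
      unfold energy
      linarith
    · push Not at hρ
      obtain ⟨j, hj⟩ := hρ
      have : prodWt β ρ = 0 := Finset.prod_eq_zero (Finset.mem_univ j)
        (Set.indicator_of_notMem (by simpa using hj) _)
      simp [this]
  simp [h]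

/-- The exponential integral of the energy through its sublevel sets: scaling turns
`∫ exp (-t) F t dt` into a Gamma integral times `F 1`. -/
lemma laplace_layer {m n : ℕ} (β : ℝ) (hβ : -1 < β) (a : Fin n → ℝ) (ha : ∀ j, 0 < a j)
    (B : Matrix (Fin m) (Fin m) ℝ) (hB : B.PosDef) :
    ∫⁻ α : Fin m → ℝ, ∫⁻ ρ : Fin n → ℝ,
        ENNReal.ofReal (rexp (-energy a B α ρ)) * ENNReal.ofReal (prodWt β ρ) =
      ENNReal.ofReal (Real.Gamma ((m : ℝ) / 2 + (β + 1) * n + 1)) * sublevelMass β a B 1 := by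
  set s : ℝ := (m : ℝ) / 2 + (β + 1) * n with hs
  have hs0 : 0 ≤ s := by
    have : 0 < β + 1 := by linarith
    positivity
  have hW : Measurable fun ρ : Fin n → ℝ => ENNReal.ofReal (prodWt β ρ) :=
    (measurable_prodWt β).ennreal_ofReal
  let K : ((Fin m → ℝ) × (Fin n → ℝ)) × ℝ → ENNReal := fun q =>
    if energy a B q.1.1 q.1.2 ≤ q.2 then
      ENNReal.ofReal (rexp (-q.2)) * ENNReal.ofReal (prodWt β q.1.2) else 0
  have hK : Measurable K := by
    refine Measurable.ite ?_ ?_ measurable_const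
    · exact measurableSet_le ((measurable_energy a B).comp measurable_fst) measurable_snd
    · exact (Measurable.ennreal_ofReal (by fun_prop)).mul
        (hW.comp (measurable_snd.comp measurable_fst))
  have h1 : ∀ p : (Fin m → ℝ) × (Fin n → ℝ),
      ENNReal.ofReal (rexp (-energy a B p.1 p.2)) * ENNReal.ofReal (prodWt β p.2) =
        ∫⁻ t, K (p, t) := by
    intro p
    rw [ofReal_exp_neg_eq, ← lintegral_mul_const' _ _ ENNReal.ofReal_ne_top]
    refine lintegral_congr fun t => ?_
    simp only [K, ite_mul, zero_mul]
  have h2 : ∀ t, ∫⁻ p : (Fin m → ℝ) × (Fin n → ℝ), K (p, t) =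
      ENNReal.ofReal (rexp (-t)) * sublevelMass β a B t := by
    intro t
    rw [Measure.volume_eq_prod, lintegral_prod (fun p => K (p, t))
      (hK.comp (measurable_prodMk_right (y := t))).aemeasurable]
    unfold sublevelMass
    rw [← lintegral_const_mul' _ _ ENNReal.ofReal_ne_top]
    refine lintegral_congr fun α => ?_
    rw [← lintegral_const_mul' _ _ ENNReal.ofReal_ne_top]
    refine lintegral_congr fun ρ => ?_
    simp only [K, mul_ite, mul_zero]
  have h3 : ∫⁻ t, ENNReal.ofReal (rexp (-t)) * sublevelMass β a B t =
      ∫⁻ t in Set.Ioi 0, ENNReal.ofReal (rexp (-t)) * sublevelMass β a B t := by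
    rw [setLIntegral_congr Ioi_ae_eq_Ici, ← lintegral_indicator measurableSet_Ici]
    refine lintegral_congr fun t => ?_
    by_cases ht : 0 ≤ t
    · rw [Set.indicator_of_mem (Set.mem_Ici.2 ht)]
    · rw [Set.indicator_of_notMem (by simpa using ht),
        sublevelMass_neg β a ha B hB (not_le.1 ht), mul_zero]
  have h4 : ∫⁻ t in Set.Ioi 0, ENNReal.ofReal (rexp (-t)) * sublevelMass β a B t =
      ∫⁻ t in Set.Ioi 0, ENNReal.ofReal (t ^ ((s + 1) - 1) * rexp (-(1 * t))) *
        sublevelMass β a B 1 := by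
    refine setLIntegral_congr_fun measurableSet_Ioi fun t ht => ?_
    have ht : 0 < t := ht
    rw [sublevelMass_scaling β a B ht, ← mul_assoc, ← ENNReal.ofReal_mul (by positivity), ← hs,
      one_mul, add_sub_cancel_right, mul_comm (rexp _)]
  calc _ = ∫⁻ p : (Fin m → ℝ) × (Fin n → ℝ),
        ENNReal.ofReal (rexp (-energy a B p.1 p.2)) * ENNReal.ofReal (prodWt β p.2) := by
        rw [Measure.volume_eq_prod, lintegral_prod]
        exact ((measurable_energy a B).neg.exp.ennreal_ofReal.mul
          (hW.comp measurable_snd)).aemeasurable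
    _ = ∫⁻ p : (Fin m → ℝ) × (Fin n → ℝ), ∫⁻ t, K (p, t) := lintegral_congr h1
    _ = ∫⁻ t, ∫⁻ p : (Fin m → ℝ) × (Fin n → ℝ), K (p, t) :=
        lintegral_lintegral_swap hK.aemeasurable
    _ = ∫⁻ t, ENNReal.ofReal (rexp (-t)) * sublevelMass β a B t := lintegral_congr h2
    _ = _ := by
        rw [h3, h4, lintegral_mul_const _ (Measurable.ennreal_ofReal (by fun_prop)),
          ← ofReal_integral_eq_lintegral_ofReal
            (integrableOn_rpow_mul_exp (by positivity) one_pos),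
          Real.integral_rpow_mul_exp_neg_mul_Ioi (by positivity) one_pos]
        · simp
        · refine (ae_restrict_iff' measurableSet_Ioi).2 (ae_of_all _ fun t ht => ?_)
          have ht : 0 < t := ht
          simp only [Pi.zero_apply]
          positivity

/-! ### The Laplace transform as a product -/

lemma lintegral_prod_pi {n : ℕ} (f : Fin n → ℝ → ℝ) (hf : ∀ j, Integrable (f j))
    (h0 : ∀ j x, 0 ≤ f j x) :
    ∫⁻ x : Fin n → ℝ, ENNReal.ofReal (∏ j, f j (x j)) = ENNReal.ofReal (∏ j, ∫ x, f j x) := by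
  rw [← integral_fintype_prod_volume_eq_prod, ofReal_integral_eq_lintegral_ofReal]
  · exact Integrable.fintype_prod_dep hf
  · exact ae_of_all _ fun x => Finset.prod_nonneg fun j _ => h0 j _

lemma gaussian_std (m : ℕ) :
    ∫⁻ x : Fin m → ℝ, ENNReal.ofReal (rexp (-(x ⬝ᵥ x))) = ENNReal.ofReal (π ^ ((m : ℝ) / 2)) := by
  have h := lintegral_prod_pi (n := m) (fun _ x => rexp (-1 * x ^ 2))
    (fun _ => integrable_exp_neg_mul_sq one_pos) (fun _ _ => (Real.exp_pos _).le)
  simp only [integral_gaussian, div_one, Finset.prod_const, Finset.card_univ, Fintype.card_fin,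
    ← Real.exp_sum] at h
  rw [Real.sqrt_eq_rpow, ← Real.rpow_natCast, ← Real.rpow_mul Real.pi_pos.le] at h
  rw [show (m : ℝ) / 2 = 1 / 2 * m by ring, ← h]
  refine lintegral_congr fun x => ?_
  congr 2
  rw [dotProduct, ← Finset.sum_neg_distrib]
  exact Finset.sum_congr rfl fun j _ => by ring

/-- Factoring `B = Sᵀ S` reduces to the standard Gaussian by `y = S x`, with `|det S| = √(det B)`. -/
lemma gaussian_posDef {m : ℕ} (B : Matrix (Fin m) (Fin m) ℝ) (hB : B.PosDef) :
    ∫⁻ x : Fin m → ℝ, ENNReal.ofReal (rexp (-(x ⬝ᵥ B.mulVec x))) =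
      ENNReal.ofReal (π ^ ((m : ℝ) / 2) / √B.det) := by
  obtain ⟨S, hS⟩ : ∃ S : Matrix (Fin m) (Fin m) ℝ, B = Sᵀ * S := by
    open scoped MatrixOrder Matrix.Norms.L2Operator in
    obtain ⟨S, hS⟩ := CStarAlgebra.nonneg_iff_eq_star_mul_self.mp hB.posSemidef.nonneg
    exact ⟨S, by rw [hS, Matrix.star_eq_conjTranspose, Matrix.conjTranspose_eq_transpose_of_trivial]⟩
  have hdet : B.det = S.det ^ 2 := by
    rw [hS, Matrix.det_mul, Matrix.det_transpose, sq]
  have hS0 : S.det ≠ 0 := by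
    intro h
    have := hB.det_pos
    simp [hdet, h] at this
  have h1 : ∀ x : Fin m → ℝ, x ⬝ᵥ B.mulVec x = (Matrix.toLin' S x) ⬝ᵥ (Matrix.toLin' S x) := by
    intro x
    rw [hS, Matrix.toLin'_apply, ← Matrix.mulVec_mulVec, Matrix.dotProduct_mulVec,
      Matrix.vecMul_transpose]
  have hmeas : Measurable fun x : Fin m → ℝ => ENNReal.ofReal (rexp (-(x ⬝ᵥ x))) := by
    refine Measurable.ennreal_ofReal (Continuous.measurable ?_)
    exact Real.continuous_exp.comp (continuous_id.dotProduct continuous_id).neg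
  simp only [h1]
  rw [← lintegral_map (f := fun x : Fin m → ℝ => ENNReal.ofReal (rexp (-(x ⬝ᵥ x)))) hmeas
      (LinearMap.continuous_of_finiteDimensional _).measurable,
    Real.map_matrix_volume_pi_eq_smul_volume_pi hS0, lintegral_smul_measure, gaussian_std,
    smul_eq_mul, ← ENNReal.ofReal_mul (abs_nonneg _), hdet, Real.sqrt_sq_eq_abs, abs_inv,
    div_eq_inv_mul (π ^ ((m : ℝ) / 2))]

lemma laplace_wt {β : ℝ} (hβ : -1 < β) {c : ℝ} (hc : 0 < c) :
    Integrable (fun x => rexp (-(c * x)) * wt β x) ∧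
      ∫ x, rexp (-(c * x)) * wt β x = Real.Gamma (β + 1) * c ^ (-β - 1) := by
  have h : (fun x => rexp (-(c * x)) * wt β x) =
      (Set.Ici (0 : ℝ)).indicator fun x => x ^ ((β + 1) - 1) * rexp (-(c * x)) := by
    funext x
    unfold wt
    by_cases hx : x ∈ Set.Ici (0 : ℝ)
    · rw [Set.indicator_of_mem hx, Set.indicator_of_mem hx, add_sub_cancel_right, mul_comm]
    · rw [Set.indicator_of_notMem hx, Set.indicator_of_notMem hx, mul_zero]
  have hb : 0 < β + 1 := by linarith
  rw [h]
  constructor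
  · rw [integrable_indicator_iff measurableSet_Ici, integrableOn_Ici_iff_integrableOn_Ioi]
    exact integrableOn_rpow_mul_exp hb hc
  · rw [integral_indicator measurableSet_Ici, integral_Ici_eq_integral_Ioi,
      Real.integral_rpow_mul_exp_neg_mul_Ioi hb hc, one_div, Real.inv_rpow hc.le,
      ← Real.rpow_neg hc.le, mul_comm, neg_add']

/-- The energy separates in `α` and the `ρ_j`, so its exponential integral factorizes. -/
lemma laplace_product {m n : ℕ} (β : ℝ) (hβ : -1 < β) (a : Fin n → ℝ) (ha : ∀ j, 0 < a j)
    (B : Matrix (Fin m) (Fin m) ℝ) (hB : B.PosDef) :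
    ∫⁻ α : Fin m → ℝ, ∫⁻ ρ : Fin n → ℝ,
        ENNReal.ofReal (rexp (-energy a B α ρ)) * ENNReal.ofReal (prodWt β ρ) =
      ENNReal.ofReal (π ^ ((m : ℝ) / 2) / √B.det *
        (Real.Gamma (β + 1) ^ n * ∏ j, a j ^ (-β - 1))) := by
  have h1 : ∀ (α : Fin m → ℝ) (ρ : Fin n → ℝ),
      ENNReal.ofReal (rexp (-energy a B α ρ)) * ENNReal.ofReal (prodWt β ρ) =
        ENNReal.ofReal (rexp (-(α ⬝ᵥ B.mulVec α))) *
          ENNReal.ofReal (∏ j, (rexp (-(a j * ρ j)) * wt β (ρ j))) := by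
    intro α ρ
    rw [← ENNReal.ofReal_mul (Real.exp_pos _).le, ← ENNReal.ofReal_mul (Real.exp_pos _).le]
    congr 1
    rw [Finset.prod_mul_distrib, ← Real.exp_sum, ← mul_assoc, ← Real.exp_add,
      Finset.sum_neg_distrib]
    unfold energy prodWt
    congr 2
    ring
  simp only [h1]
  simp only [lintegral_const_mul' _ _ ENNReal.ofReal_ne_top]
  rw [lintegral_prod_pi (fun j x => rexp (-(a j * x)) * wt β x)
      (fun j => (laplace_wt hβ (ha j)).1)
      (fun j x => mul_nonneg (Real.exp_pos _).le (wt_nonneg _ _)),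
    lintegral_mul_const' _ _ ENNReal.ofReal_ne_top, gaussian_posDef B hB,
    ← ENNReal.ofReal_mul (by positivity)]
  simp only [(laplace_wt hβ (ha _)).2, Finset.prod_mul_distrib, Finset.prod_const,
    Finset.card_univ, Fintype.card_fin]

/-! ### The identity -/

/-- Outside the orthant, where `ρ_j ^ β` takes conventional values, both integrands vanish; inside,
they agree. -/
lemma integral_eq_sublevelMass {m n : ℕ} (β : ℝ) (a : Fin n → ℝ)
    (B : Matrix (Fin m) (Fin m) ℝ) (ε : ℝ) :
    (∫ p in {p : (Fin m → ℝ) × (Fin n → ℝ) |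
        (∀ j, 0 ≤ p.2 j) ∧ (∑ j, a j * p.2 j) + p.1 ⬝ᵥ B.mulVec p.1 ≤ ε},
      ∏ j, (p.2 j) ^ β) = (sublevelMass β a B ε).toReal := by
  have hSm : MeasurableSet {p : (Fin m → ℝ) × (Fin n → ℝ) |
        (∀ j, 0 ≤ p.2 j) ∧ (∑ j, a j * p.2 j) + p.1 ⬝ᵥ B.mulVec p.1 ≤ ε} := by
    have h : MeasurableSet {p : (Fin m → ℝ) × (Fin n → ℝ) | ∀ j, 0 ≤ p.2 j} := by
      simp only [Set.ofPred_forall]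
      exact MeasurableSet.iInter fun j => measurableSet_le measurable_const (by fun_prop)
    exact h.inter (measurableSet_le (measurable_energy a B) measurable_const)
  have hf : Measurable fun p : (Fin m → ℝ) × (Fin n → ℝ) => ∏ j, (p.2 j) ^ β :=
    Finset.measurable_fun_prod _ fun j _ => Measurable.pow_const (by fun_prop) β
  rw [integral_eq_lintegral_of_nonneg_ae
    (ae_restrict_of_forall_mem hSm fun p hp =>
      Finset.prod_nonneg fun j _ => Real.rpow_nonneg (hp.1 j) _)
    hf.aestronglyMeasurable, ← lintegral_indicator hSm, Measure.volume_eq_prod,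
    lintegral_prod _ (hf.ennreal_ofReal.indicator hSm).aemeasurable]
  unfold sublevelMass
  congr 1
  refine lintegral_congr fun α => lintegral_congr fun ρ => ?_
  by_cases hρ : ∀ j, 0 ≤ ρ j
  · have hw : prodWt β ρ = ∏ j, (ρ j) ^ β :=
      Finset.prod_congr rfl fun j _ => Set.indicator_of_mem (Set.mem_Ici.2 (hρ j)) _
    by_cases h : energy a B α ρ ≤ ε
    · rw [if_pos h, Set.indicator_of_mem (by exact ⟨hρ, h⟩), hw]
    · rw [if_neg h, Set.indicator_of_notMem (fun hp => h hp.2)]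
  · rw [Set.indicator_of_notMem (fun hp => hρ hp.1)]
    push Not at hρ
    obtain ⟨j, hj⟩ := hρ
    have : prodWt β ρ = 0 := Finset.prod_eq_zero (Finset.mem_univ j)
      (Set.indicator_of_notMem (by simpa using hj) _)
    simp [this]

/-- The Laplace-type integral identity (analytic core of Lemma 2): for `a_j > 0`, a
symmetric positive definite `(n−1)×(n−1)` matrix `B` and `ε > 0`,
`∫ 1{Σ a_j ρ_j + ⟨Bα,α⟩ ≤ ε} Π ρ_j^β dρ dα
  = π^{(n−1)/2} Γ(β+1)^n / (Γ((β+3/2)n+1/2) √(det B)) · Π a_j^{−β−1} · ε^{(β+3/2)n−1/2}`. -/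
theorem stmt9 (n : ℕ) (hn : 1 ≤ n) (β : ℝ) (hβ : -1 < β)
    (a : Fin n → ℝ) (ha : ∀ j, 0 < a j)
    (B : Matrix (Fin (n - 1)) (Fin (n - 1)) ℝ) (hB : B.PosDef)
    (ε : ℝ) (hε : 0 < ε) :
    (∫ p in {p : (Fin (n - 1) → ℝ) × (Fin n → ℝ) |
        (∀ j, 0 ≤ p.2 j) ∧ (∑ j, a j * p.2 j) + p.1 ⬝ᵥ B.mulVec p.1 ≤ ε},
      ∏ j, (p.2 j) ^ β) =
    (π ^ (((n : ℝ) - 1) / 2) * Real.Gamma (β + 1) ^ n /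
        (Real.Gamma ((β + 3 / 2) * n + 1 / 2) * Real.sqrt B.det)) *
      (∏ j, (a j) ^ (-β - 1)) * ε ^ ((β + 3 / 2) * n - 1 / 2) := by
  have hm : ((n - 1 : ℕ) : ℝ) = (n : ℝ) - 1 := by push_cast [hn]; ring
  have hb : 0 < β + 1 := by linarith
  have key := (laplace_layer β hβ a ha B hB).symm.trans (laplace_product β hβ a ha B hB)
  have hG : 0 < Real.Gamma (((n - 1 : ℕ) : ℝ) / 2 + (β + 1) * n + 1) :=
    Real.Gamma_pos_of_pos (by positivity)
  have key' := congrArg ENNReal.toReal key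
  have hGb : 0 < Real.Gamma (β + 1) := Real.Gamma_pos_of_pos hb
  have hP : 0 < ∏ j, a j ^ (-β - 1) := Finset.prod_pos fun j _ => Real.rpow_pos_of_pos (ha j) _
  rw [ENNReal.toReal_mul, ENNReal.toReal_ofReal hG.le,
    ENNReal.toReal_ofReal (by positivity)] at key'
  rw [integral_eq_sublevelMass, sublevelMass_scaling β a B hε, ENNReal.toReal_mul,
    ENNReal.toReal_ofReal (by positivity), eq_div_of_mul_eq hG.ne' ((mul_comm _ _).trans key'), hm,
    show ((n : ℝ) - 1) / 2 + (β + 1) * n = (β + 3 / 2) * n - 1 / 2 by ring,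
    show (β + 3 / 2) * (n : ℝ) - 1 / 2 + 1 = (β + 3 / 2) * n + 1 / 2 by ring]
  have hd : √B.det ≠ 0 := (Real.sqrt_pos.2 hB.det_pos).ne'
  have hG' : Real.Gamma ((β + 3 / 2) * n + 1 / 2) ≠ 0 := by
    rw [hm] at hG
    convert hG.ne' using 2
    ring
  field_simp
end
end

section
/- Let n ≥ 3 and let x_1,…,x_n be points of the closed unit disk B² ⊂ ℝ². Then the perimeter of their convex hull satisfies per([x_1,…,x_n]) ≤ 2n·sin(π/n), and equality holds when x_1,…,x_n are the vertices of a regular n-gon inscribed in the unit circle. -/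
/-!
The upper bound rests on the Cauchy formula: the perimeter of a convex body is `∫ h` over `[0, 2π]`,
where `h θ = max_i ⟨x_i, e^{iθ}⟩` is its support function. With `c = cos (π/n) ≥ 0`, points of the
unit disk satisfy

  `h θ ≤ c + ∑ i, (⟨x_i, e^{iθ}⟩ - c)⁺ ≤ c + ∑ i, (cos (θ - arg x_i) - c)⁺`,

and integrating gives `2πc + n (2 sin (π/n) - 2 (π/n) c) = 2n sin (π/n)` (`supp_le`,
`integral_cap`, `perim_le`). No cyclic ordering of the points is needed.

Only the inequality `≤` of the Cauchy formula is required (`perim_le_integral`), and it must also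
cover degenerate hulls. For `N = 4m` and any phase `φ`, the hull `K` lies in the circumscribed
polygon with outer normals at the angles `φ + kδ`, `δ = 2π/N`. Nearest point projection onto `K` is
`1`-Lipschitz and maps the boundary of that polygon onto a set containing `∂K`
(`frontier_measure_le`, `exists_exit`), so `μH[1] (∂K)` is at most the sum of the edge lengths,
which are explicit in terms of `h` (`hull_measure_le`). Averaging over `φ` gives
`per K ≤ (tan (δ/2) / (δ/2)) ∫ h` (`perim_le_average`, with `2 tan (δ/2)` written as
`(2 - 2 cos δ) / sin δ`), and `m → ∞` finishes.

For the regular `n`-gon it remains to see that its boundary contains the `n` edges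
(`edge_subset_frontier`), which have length `2 sin (π/n)` and pairwise meet in at most one point
(`edge_inter_subsingleton`), hence in a set of measure zero.
-/

open MeasureTheory Real Filter Topology

noncomputable section

/-- The perimeter of the convex hull of a finite family of points in the plane:
the one-dimensional Hausdorff measure of its topological boundary. -/
def perim {m : ℕ} (x : Fin m → ℂ) : ℝ :=
  (μH[1] (frontier (convexHull ℝ (Set.range x)))).toReal

/-- The vertices of the regular `n`-gon inscribed in the unit circle. -/
def regularVertices (n : ℕ) : Fin n → ℂ :=
  fun j => Complex.exp ((2 * π * (j : ℝ) / n : ℝ) * Complex.I)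

/-! ### Nearest point projection and the boundary -/

/-- The signed extent `⟨z, e^{iθ}⟩` of `z` in the direction of angle `θ`. -/
def dirDot (z : ℂ) (θ : ℝ) : ℝ := z.re * Real.cos θ + z.im * Real.sin θ

/-- Nearest point projection onto `K`, with its variational characterization. -/
lemma exists_proj {K : Set ℂ} (hne : K.Nonempty) (hc : IsComplete K) (hconv : Convex ℝ K) :
    ∃ p : ℂ → ℂ, LipschitzWith 1 p ∧ (∀ y, p y ∈ K) ∧
      (∀ y, ∀ w ∈ K, inner ℝ (y - p y) (w - p y) ≤ 0) ∧
      (∀ y, ∀ q ∈ K, (∀ w ∈ K, inner ℝ (y - q) (w - q) ≤ 0) → p y = q) := by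
  have key : ∀ y : ℂ, ∃ q ∈ K, ∀ w ∈ K, inner ℝ (y - q) (w - q) ≤ 0 := by
    intro y
    obtain ⟨q, hq, h⟩ := exists_norm_eq_iInf_of_complete_convex hne hc hconv y
    exact ⟨q, hq, (norm_eq_iInf_iff_real_inner_le_zero hconv hq).1 h⟩
  choose p hp hin using key
  have lip : ∀ y y' a b : ℂ, inner ℝ (y - a) (b - a) ≤ 0 → inner ℝ (y' - b) (a - b) ≤ 0 →
      ‖a - b‖ ≤ ‖y - y'‖ := by
    intro y y' a b h1 h2
    have h3 : ‖a - b‖ ^ 2 ≤ inner ℝ (y - y') (a - b) := by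
      rw [← real_inner_self_eq_norm_sq]
      simp only [Complex.inner, Complex.sub_re, Complex.sub_im, Complex.mul_re, Complex.conj_re,
        Complex.conj_im] at *
      nlinarith
    have h4 := real_inner_le_norm (y - y') (a - b)
    by_contra! h
    have := norm_nonneg (y - y')
    nlinarith
  refine ⟨p, ?_, hp, hin, ?_⟩
  · refine LipschitzWith.of_dist_le_mul fun y y' => ?_
    simpa [dist_eq_norm] using
      lip y y' (p y) (p y') (hin y _ (hp y')) (hin y' _ (hp y))
  · intro y q hq h
    have := lip y y (p y) q (hin y _ hq) (h _ (hp y))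
    simpa [sub_eq_zero] using this

/-- If every ray starting in `K` meets the compact set `U`, then nearest point projection carries
`U` onto a superset of the boundary of `K`: apply this to the rays from the projection of `y`
through `y`, for `y ∉ K`, and use that the image of `U` is closed. -/
lemma frontier_measure_le {K U : Set ℂ} (hne : K.Nonempty) (hK : IsCompact K)
    (hconv : Convex ℝ K) (hU : IsCompact U)
    (h : ∀ q ∈ K, ∀ v : ℂ, v ≠ 0 → ∃ t : ℝ, 0 ≤ t ∧ q + t * v ∈ U) :
    μH[1] (frontier K) ≤ μH[1] U := by
  obtain ⟨p, hlip, hp, hin, huniq⟩ := exists_proj hne hK.isComplete hconv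
  have hsub : frontier K ⊆ p '' U := by
    have hout : ∀ y ∉ K, p y ∈ p '' U := by
      intro y hy
      have hv : y - p y ≠ 0 := fun h0 => hy (by rw [sub_eq_zero.1 h0]; exact hp y)
      obtain ⟨t, ht, htU⟩ := h (p y) (hp y) _ hv
      refine ⟨_, htU, huniq _ _ (hp y) fun w hw => ?_⟩
      have := hin y w hw
      have e : p y + t * (y - p y) - p y = t • (y - p y) := by
        rw [Complex.real_smul]; ring
      rw [e, real_inner_smul_left]
      exact mul_nonpos_of_nonneg_of_nonpos ht this
    have hcl : IsClosed (p ⁻¹' (p '' U)) :=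
      (hU.image hlip.continuous).isClosed.preimage hlip.continuous
    intro z hz
    have hz' : z ∈ closure Kᶜ := (frontier_eq_closure_inter_closure (s := K) ▸ hz).2
    have h1 : z ∈ p ⁻¹' (p '' U) := closure_minimal (fun y hy => hout y hy) hcl hz'
    have hzK : z ∈ K := hK.isClosed.frontier_subset hz
    have h2 : p z = z := huniq z z hzK (by simp)
    rwa [Set.mem_preimage, h2] at h1
  calc μH[1] (frontier K) ≤ μH[1] (p '' U) := measure_mono hsub
    _ ≤ (1 : NNReal) ^ (1 : ℝ) * μH[1] U := by
      simpa using hlip.hausdorffMeasure_image_le (d := 1) zero_le_one U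
    _ = μH[1] U := by simp

/-! ### Circumscribed polygons -/

/-- The piece of the supporting line `⟨z, e^{iθ}⟩ = H θ` cut out by the supporting half-planes in
the directions `θ ± δ`, parametrized by arc length. -/
def edgeSet (H : ℝ → ℝ) (δ θ : ℝ) : Set ℂ :=
  (fun s : ℝ => (H θ + s * Complex.I) * Complex.exp (θ * Complex.I)) ''
    Set.Icc (-((H (θ - δ) - H θ * Real.cos δ) / Real.sin δ))
      ((H (θ + δ) - H θ * Real.cos δ) / Real.sin δ)

/-- The length of `edgeSet H δ θ`, when nonnegative. -/
def edgeLen (H : ℝ → ℝ) (δ θ : ℝ) : ℝ :=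
  (H (θ + δ) + H (θ - δ) - 2 * Real.cos δ * H θ) / Real.sin δ

lemma edgeSet_lip (a θ : ℝ) : LipschitzWith 1
    (fun s : ℝ => ((a : ℂ) + s * Complex.I) * Complex.exp (θ * Complex.I)) := by
  refine LipschitzWith.of_dist_le_mul fun s t => ?_
  have e : ((a : ℂ) + s * Complex.I) * Complex.exp (θ * Complex.I) -
      (a + t * Complex.I) * Complex.exp (θ * Complex.I) =
      ((s - t : ℝ) : ℂ) * Complex.I * Complex.exp (θ * Complex.I) := by
    push_cast; ring
  rw [dist_eq_norm, e, norm_mul, norm_mul, Complex.norm_exp_ofReal_mul_I, Complex.norm_real,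
    dist_eq_norm]
  simp

lemma edgeSet_compact (H : ℝ → ℝ) (δ θ : ℝ) : IsCompact (edgeSet H δ θ) :=
  isCompact_Icc.image (edgeSet_lip _ _).continuous

lemma edgeSet_measure (H : ℝ → ℝ) (δ θ : ℝ) :
    μH[1] (edgeSet H δ θ) ≤ ENNReal.ofReal (edgeLen H δ θ) := by
  refine ((edgeSet_lip (H θ) θ).hausdorffMeasure_image_le (d := 1) zero_le_one _).trans ?_
  rw [hausdorffMeasure_real, Real.volume_Icc]
  simp only [ENNReal.coe_one, ENNReal.one_rpow, one_mul]
  refine ENNReal.ofReal_le_ofReal (le_of_eq ?_)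
  unfold edgeLen
  ring

lemma mem_edgeSet {H : ℝ → ℝ} {δ θ : ℝ} (hδ : 0 < Real.sin δ) {z : ℂ}
    (h0 : dirDot z θ = H θ) (h1 : dirDot z (θ + δ) ≤ H (θ + δ))
    (h2 : dirDot z (θ - δ) ≤ H (θ - δ)) : z ∈ edgeSet H δ θ := by
  -- `s` is the coordinate of `z` along the supporting line
  set s := z.im * Real.cos θ - z.re * Real.sin θ with hs
  have hsc := Real.sin_sq_add_cos_sq θ
  have e1 : dirDot z (θ + δ) = H θ * Real.cos δ + s * Real.sin δ := by
    rw [← h0, hs]; simp only [dirDot, Real.cos_add, Real.sin_add]; ring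
  have e2 : dirDot z (θ - δ) = H θ * Real.cos δ - s * Real.sin δ := by
    rw [← h0, hs]; simp only [dirDot, Real.cos_sub, Real.sin_sub]; ring
  refine ⟨s, ⟨?_, ?_⟩, ?_⟩
  · rw [neg_le, le_div_iff₀ hδ]; linarith
  · rw [le_div_iff₀ hδ]; linarith
  · rw [← h0, hs, Complex.exp_mul_I, ← Complex.ofReal_cos, ← Complex.ofReal_sin]
    apply Complex.ext
    · simp [dirDot, -Complex.ofReal_cos, -Complex.ofReal_sin]; linear_combination z.re * hsc
    · simp [dirDot, -Complex.ofReal_cos, -Complex.ofReal_sin]; linear_combination z.im * hsc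

lemma dirDot_le_of_mem_hull {s : Set ℂ} {c θ : ℝ} (h : ∀ w ∈ s, dirDot w θ ≤ c) {z : ℂ}
    (hz : z ∈ convexHull ℝ s) : dirDot z θ ≤ c := by
  have hconv : Convex ℝ {w : ℂ | dirDot w θ ≤ c} := by
    intro a ha b hb u v hu hv huv
    simp only [Set.mem_ofPred_eq, dirDot, Complex.add_re, Complex.add_im, Complex.real_smul,
      Complex.mul_re, Complex.mul_im, Complex.ofReal_re, Complex.ofReal_im] at *
    have h1 := mul_le_mul_of_nonneg_left ha hu
    have h2 := mul_le_mul_of_nonneg_left hb hv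
    have h3 : u * c + v * c = c := by rw [← add_mul, huv, one_mul]
    linarith
  exact convexHull_min h hconv hz

/-- Some direction of the grid of mesh `2π / (4m)` makes an acute angle with `v ≠ 0`: the grid is
invariant under quarter turns. -/
lemma exists_pos_dir {m : ℕ} (hm : 0 < m) (φ : ℝ) {v : ℂ} (hv : v ≠ 0) :
    ∃ k ∈ Finset.range (4 * m), 0 < dirDot v (φ + k * (2 * π / (4 * m))) := by
  have hm' : (m : ℝ) ≠ 0 := by positivity
  have q0 : φ + ((0 : ℕ) : ℝ) * (2 * π / (4 * m)) = φ := by simp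
  have q1 : φ + ((m : ℕ) : ℝ) * (2 * π / (4 * m)) = φ + π / 2 := by field_simp; ring
  have q2 : φ + ((2 * m : ℕ) : ℝ) * (2 * π / (4 * m)) = φ + π := by push_cast; field_simp; ring
  have q3 : φ + ((3 * m : ℕ) : ℝ) * (2 * π / (4 * m)) = φ + π / 2 + π := by
    push_cast; field_simp; ring
  by_contra! hcon
  have h0 := hcon 0 (by simp; omega)
  have h1 := hcon m (by simp; omega)
  have h2 := hcon (2 * m) (by simp; omega)
  have h3 := hcon (3 * m) (by simp; omega)
  rw [q0] at h0
  rw [q1] at h1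
  rw [q2] at h2
  rw [q3] at h3
  simp only [dirDot, Real.cos_add_pi, Real.sin_add_pi, Real.cos_add_pi_div_two,
    Real.sin_add_pi_div_two] at *
  have hsc := Real.sin_sq_add_cos_sq φ
  have A : v.re * Real.cos φ + v.im * Real.sin φ = 0 := by linarith
  have B : v.re * -Real.sin φ + v.im * Real.cos φ = 0 := by linarith
  apply hv
  apply Complex.ext
  · simp only [Complex.zero_re]
    linear_combination Real.cos φ * A - Real.sin φ * B - v.re * hsc
  · simp only [Complex.zero_im]
    linear_combination Real.sin φ * A + Real.cos φ * B - v.im * hsc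

lemma dirDot_periodic (z : ℂ) : Function.Periodic (dirDot z) (2 * π) := by
  intro θ; simp [dirDot]

/-- A ray starting in the circumscribed polygon `{z | ∀ k, ⟨z, e^{iθ_k}⟩ ≤ H θ_k}` leaves it
through one of its edges. -/
lemma exists_exit {m : ℕ} (hm : 0 < m) (φ : ℝ) {H : ℝ → ℝ} (hper : Function.Periodic H (2 * π))
    {q v : ℂ} (hq : ∀ θ, dirDot q θ ≤ H θ) (hv : v ≠ 0) :
    ∃ t : ℝ, 0 ≤ t ∧ ∃ k ∈ Finset.range (4 * m),
      q + t * v ∈ edgeSet H (2 * π / (4 * m)) (φ + k * (2 * π / (4 * m))) := by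
  set δ := 2 * π / (4 * m) with hδ
  have hm1 : (1 : ℝ) ≤ m := by exact_mod_cast hm
  have hδ0 : 0 < δ := by positivity
  have hδ1 : δ < π := by
    rw [hδ, div_lt_iff₀ (by positivity)]; nlinarith [Real.pi_pos]
  set F := (Finset.range (4 * m)).filter fun k : ℕ => 0 < dirDot v (φ + k * δ) with hF
  have hFne : F.Nonempty := by
    obtain ⟨k, hk, hk'⟩ := exists_pos_dir hm φ hv
    exact ⟨k, by simp only [hF, Finset.mem_filter]; exact ⟨hk, hk'⟩⟩
  let τ : ℕ → ℝ := fun k => (H (φ + k * δ) - dirDot q (φ + k * δ)) / dirDot v (φ + k * δ)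
  -- the exit time is the first time at which some half-plane constraint becomes tight
  obtain ⟨k, hkF, hmin⟩ := Finset.exists_min_image F τ hFne
  obtain ⟨hk, hkpos⟩ := Finset.mem_filter.1 hkF
  have ht : 0 ≤ τ k := div_nonneg (sub_nonneg.2 (hq _)) hkpos.le
  have hlin : ∀ θ, dirDot (q + (τ k : ℂ) * v) θ = dirDot q θ + τ k * dirDot v θ := by
    intro θ; simp [dirDot]; ring
  have hall : ∀ j ∈ Finset.range (4 * m),
      dirDot (q + (τ k : ℂ) * v) (φ + j * δ) ≤ H (φ + j * δ) := by
    intro j hj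
    rw [hlin]
    by_cases hpos : 0 < dirDot v (φ + j * δ)
    · have h1 : τ k ≤ τ j := hmin j (Finset.mem_filter.2 ⟨hj, hpos⟩)
      have h2 : τ j * dirDot v (φ + j * δ) = H (φ + j * δ) - dirDot q (φ + j * δ) :=
        div_mul_cancel₀ _ hpos.ne'
      nlinarith
    · nlinarith [hq (φ + j * δ)]
  have hallZ : ∀ j : ℤ, dirDot (q + (τ k : ℂ) * v) (φ + j * δ) ≤ H (φ + j * δ) := by
    intro j
    have hN : (0 : ℤ) < 4 * m := by omega
    have hr0 := Int.emod_nonneg j hN.ne'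
    have hr1 := Int.emod_lt_of_pos j hN
    have hj : φ + j * δ = φ + ((j % (4 * m)).toNat : ℝ) * δ + (j / (4 * m) : ℤ) * (2 * π) := by
      have e1 : ((j % (4 * m)).toNat : ℝ) = ((j % (4 * m) : ℤ) : ℝ) := by
        exact_mod_cast congrArg (Int.cast : ℤ → ℝ) (Int.toNat_of_nonneg hr0)
      have e2 : (j : ℝ) = ((j % (4 * m) : ℤ) : ℝ) + (4 * m) * ((j / (4 * m) : ℤ) : ℝ) := by
        exact_mod_cast (Int.emod_add_mul_ediv j (4 * m)).symm
      have e3 : (4 * m : ℝ) * δ = 2 * π := by rw [hδ]; field_simp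
      rw [e1]
      linear_combination δ * e2 + ((j / (4 * m) : ℤ) : ℝ) * e3
    rw [hj, (dirDot_periodic _).int_mul, hper.int_mul]
    exact hall _ (by simp only [Finset.mem_range]; omega)
  refine ⟨τ k, ht, k, hk, mem_edgeSet (Real.sin_pos_of_pos_of_lt_pi hδ0 hδ1) ?_ ?_ ?_⟩
  · rw [hlin]
    have : τ k * dirDot v (φ + k * δ) = H (φ + k * δ) - dirDot q (φ + k * δ) :=
      div_mul_cancel₀ _ hkpos.ne'
    linarith
  · have := hallZ (k + 1)
    push_cast at this
    rwa [add_mul, one_mul, ← add_assoc] at this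
  · have := hallZ (k - 1)
    push_cast at this
    rwa [sub_mul, one_mul, ← add_sub_assoc] at this

/-- The support function of the convex hull of `x`, as a function of the angle. -/
def supp {n : ℕ} (x : Fin n → ℂ) (θ : ℝ) : ℝ := ⨆ i, dirDot (x i) θ

lemma le_supp {n : ℕ} (x : Fin n → ℂ) (i : Fin n) (θ : ℝ) : dirDot (x i) θ ≤ supp x θ :=
  le_ciSup (f := fun i => dirDot (x i) θ) (Set.finite_range _).bddAbove i

lemma exists_supp_eq {n : ℕ} (hn : 0 < n) (x : Fin n → ℂ) (θ : ℝ) :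
    ∃ i, dirDot (x i) θ = supp x θ := by
  have : Nonempty (Fin n) := ⟨⟨0, hn⟩⟩
  exact exists_eq_ciSup_of_finite

lemma supp_periodic {n : ℕ} (x : Fin n → ℂ) : Function.Periodic (supp x) (2 * π) := by
  intro θ; unfold supp; simp_rw [(dirDot_periodic _) θ]

lemma dirDot_continuous (z : ℂ) : Continuous (dirDot z) := by
  unfold dirDot; fun_prop

lemma supp_continuous {n : ℕ} (hn : 0 < n) (x : Fin n → ℂ) : Continuous (supp x) := by
  have : Nonempty (Fin n) := ⟨⟨0, hn⟩⟩
  have : supp x = fun θ => Finset.univ.sup' Finset.univ_nonempty fun i => dirDot (x i) θ := by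
    funext θ; rw [Finset.sup'_univ_eq_ciSup]; rfl
  rw [this]
  exact Continuous.finset_sup'_apply _ fun i _ => dirDot_continuous _

lemma edgeLen_nonneg {n : ℕ} (hn : 0 < n) (x : Fin n → ℂ) {δ : ℝ} (hδ : 0 < Real.sin δ) (θ : ℝ) :
    0 ≤ edgeLen (supp x) δ θ := by
  refine div_nonneg ?_ hδ.le
  obtain ⟨i, hi⟩ := exists_supp_eq hn x θ
  have h1 := le_supp x i (θ + δ)
  have h2 := le_supp x i (θ - δ)
  have : dirDot (x i) (θ + δ) + dirDot (x i) (θ - δ) = 2 * Real.cos δ * dirDot (x i) θ := by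
    simp only [dirDot, Real.cos_add, Real.sin_add, Real.cos_sub, Real.sin_sub]; ring
  rw [← hi]; linarith

/-- The perimeter is at most that of the circumscribed `4m`-gon with edge normals
`e^{i(φ + kδ)}`. -/
lemma hull_measure_le {n : ℕ} (hn : 0 < n) (x : Fin n → ℂ) {m : ℕ} (hm : 0 < m) (φ : ℝ) :
    μH[1] (frontier (convexHull ℝ (Set.range x))) ≤
      ENNReal.ofReal (∑ k ∈ Finset.range (4 * m),
        edgeLen (supp x) (2 * π / (4 * m)) (φ + k * (2 * π / (4 * m)))) := by
  set δ := 2 * π / (4 * m) with hδ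
  have hm1 : (1 : ℝ) ≤ m := by exact_mod_cast hm
  have hδ0 : 0 < δ := by positivity
  have hδ1 : δ < π := by
    rw [hδ, div_lt_iff₀ (by positivity)]; nlinarith [Real.pi_pos]
  have hs := Real.sin_pos_of_pos_of_lt_pi hδ0 hδ1
  have : Nonempty (Fin n) := ⟨⟨0, hn⟩⟩
  rw [ENNReal.ofReal_sum_of_nonneg fun k _ => edgeLen_nonneg hn x hs _]
  refine (frontier_measure_le (U := ⋃ k ∈ Finset.range (4 * m), edgeSet (supp x) δ (φ + k * δ))
    (Set.range_nonempty x).convexHull ((Set.finite_range x).isCompact_convexHull (𝕜 := ℝ))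
    (convex_convexHull ℝ _) ?_ ?_).trans ?_
  · exact (Finset.range (4 * m)).isCompact_biUnion fun k _ => edgeSet_compact _ _ _
  · intro q hq v hv
    obtain ⟨t, ht, k, hk, hmem⟩ := exists_exit hm φ (supp_periodic x) (q := q) (v := v)
      (fun θ => dirDot_le_of_mem_hull (by rintro _ ⟨i, rfl⟩; exact le_supp x i θ) hq) hv
    exact ⟨t, ht, Set.mem_biUnion hk hmem⟩
  · exact (measure_biUnion_finset_le _ _).trans
      (Finset.sum_le_sum fun k _ => edgeSet_measure _ _ _)

/-! ### The Cauchy formula, as an inequality -/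

lemma integral_shift {f : ℝ → ℝ} (hf : Function.Periodic f (2 * π)) (a : ℝ) :
    ∫ φ in (0 : ℝ)..2 * π, f (φ + a) = ∫ φ in (0 : ℝ)..2 * π, f φ := by
  rw [intervalIntegral.integral_comp_add_right f a]
  have := hf.intervalIntegral_add_eq a 0
  rw [zero_add] at this ⊢
  rw [← this, add_comm]

/-- Averaging `hull_measure_le` over all rotations `φ` of the circumscribed `4m`-gon. -/
lemma perim_le_average {n : ℕ} (hn : 0 < n) (x : Fin n → ℂ) {m : ℕ} (hm : 0 < m) :
    perim x * (2 * π) ≤ (4 * m) * ((2 - 2 * Real.cos (2 * π / (4 * m))) /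
      Real.sin (2 * π / (4 * m)) * ∫ θ in (0 : ℝ)..2 * π, supp x θ) := by
  set δ := 2 * π / (4 * m) with hδ
  have hm1 : (1 : ℝ) ≤ m := by exact_mod_cast hm
  have hδ0 : 0 < δ := by positivity
  have hδ1 : δ < π := by
    rw [hδ, div_lt_iff₀ (by positivity)]; nlinarith [Real.pi_pos]
  have hs := Real.sin_pos_of_pos_of_lt_pi hδ0 hδ1
  have hc := supp_continuous hn x
  have hp := supp_periodic x
  have hLc : Continuous (edgeLen (supp x) δ) := by unfold edgeLen; fun_prop
  have hLp : Function.Periodic (edgeLen (supp x) δ) (2 * π) := by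
    intro θ
    unfold edgeLen
    rw [show θ + 2 * π + δ = θ + δ + 2 * π by ring, show θ + 2 * π - δ = θ - δ + 2 * π by ring,
      hp, hp, hp]
  have hint : ∫ θ in (0 : ℝ)..2 * π, edgeLen (supp x) δ θ =
      (2 - 2 * Real.cos δ) / Real.sin δ * ∫ θ in (0 : ℝ)..2 * π, supp x θ := by
    have i1 : IntervalIntegrable (fun θ => supp x (θ + δ)) volume 0 (2 * π) :=
      Continuous.intervalIntegrable (by fun_prop) _ _
    have i2 : IntervalIntegrable (fun θ => supp x (θ + -δ)) volume 0 (2 * π) :=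
      Continuous.intervalIntegrable (by fun_prop) _ _
    have i3 : IntervalIntegrable (fun θ => 2 * Real.cos δ * supp x θ) volume 0 (2 * π) :=
      Continuous.intervalIntegrable (by fun_prop) _ _
    simp only [edgeLen, sub_eq_add_neg _ δ]
    rw [intervalIntegral.integral_div, intervalIntegral.integral_sub (i1.add i2) i3,
      intervalIntegral.integral_add i1 i2, intervalIntegral.integral_const_mul,
      integral_shift hp, integral_shift hp]
    ring
  have hpt : ∀ φ, perim x ≤ ∑ k ∈ Finset.range (4 * m), edgeLen (supp x) δ (φ + k * δ) := by
    intro φ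
    exact ENNReal.toReal_le_of_le_ofReal
      (Finset.sum_nonneg fun k _ => edgeLen_nonneg hn x hs _) (hull_measure_le hn x hm φ)
  calc perim x * (2 * π) = ∫ _φ in (0 : ℝ)..2 * π, perim x := by simp; ring
    _ ≤ ∫ φ in (0 : ℝ)..2 * π,
        ∑ k ∈ Finset.range (4 * m), edgeLen (supp x) δ (φ + k * δ) := by
      refine intervalIntegral.integral_mono_on (by positivity) (by simp)
        (Continuous.intervalIntegrable (by fun_prop) _ _) fun φ _ => hpt φ
    _ = _ := by
      rw [intervalIntegral.integral_finsetSum fun k _ =>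
        Continuous.intervalIntegrable (by fun_prop) _ _]
      simp only [integral_shift hLp, hint]
      simp

/-- The inequality `≤` of the Cauchy formula: the perimeter is the integral of the support
function. -/
lemma perim_le_integral {n : ℕ} (hn : 0 < n) (x : Fin n → ℂ) :
    perim x ≤ ∫ θ in (0 : ℝ)..2 * π, supp x θ := by
  set B := ∫ θ in (0 : ℝ)..2 * π, supp x θ
  have hP : 0 ≤ perim x := ENNReal.toReal_nonneg
  have hlim : Tendsto (fun m : ℕ => 2 * π / (4 * ((m : ℝ) + 1))) atTop (𝓝 0) := by
    have := (tendsto_one_div_add_atTop_nhds_zero_nat (𝕜 := ℝ)).const_mul (2 * π / 4)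
    rw [mul_zero] at this
    refine this.congr fun m => ?_
    field_simp
  have hlim2 : Tendsto (fun m : ℕ => perim x * (1 - (2 * π / (4 * ((m : ℝ) + 1))) ^ 2 / 6))
      atTop (𝓝 (perim x)) := by
    have := ((hlim.pow 2).div_const 6).const_sub 1 |>.const_mul (perim x)
    simpa using this
  refine le_of_tendsto hlim2 (Filter.Eventually.of_forall fun m => ?_)
  have h := perim_le_average hn x (Nat.succ_pos m)
  push_cast at h
  set δ := 2 * π / (4 * ((m : ℝ) + 1)) with hδ
  have hδ0 : 0 < δ := by positivity
  have hm0 : (0 : ℝ) ≤ m := Nat.cast_nonneg m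
  have hδ1 : δ < π := by
    rw [hδ, div_lt_iff₀ (by positivity)]; nlinarith [Real.pi_pos]
  have hs := Real.sin_pos_of_pos_of_lt_pi hδ0 hδ1
  have hs2 := Real.sin_gt_sub_cube hδ0
  have hcos := Real.one_sub_sq_div_two_le_cos (x := δ)
  have hN : (4 * ((m : ℝ) + 1)) * δ = 2 * π := by rw [hδ]; field_simp
  have hδN : 4 * ((m : ℝ) + 1) = 2 * π / δ := by rw [eq_div_iff hδ0.ne', hN]
  -- in the form `perim x * δ * sin δ ≤ (2 - 2 cos δ) * B`
  have h2 : perim x * (δ * Real.sin δ) ≤ (2 - 2 * Real.cos δ) * B := by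
    rw [hδN] at h
    have e : 2 * π / δ * ((2 - 2 * Real.cos δ) / Real.sin δ * B) =
        (2 * π) * ((2 - 2 * Real.cos δ) * B) / (δ * Real.sin δ) := by
      field_simp
    rw [e, le_div_iff₀ (by positivity)] at h
    have : 0 < 2 * π := by positivity
    nlinarith
  have hB : 0 ≤ B := by
    by_contra! hB
    have hc1 : Real.cos δ < 1 := by
      rw [← Real.cos_zero]
      exact Real.cos_lt_cos_of_nonneg_of_le_pi le_rfl hδ1.le hδ0
    have : (2 - 2 * Real.cos δ) * B < 0 := mul_neg_of_pos_of_neg (by linarith) hB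
    have : 0 ≤ perim x * (δ * Real.sin δ) := by positivity
    linarith
  have h3 : perim x * (δ * (δ - δ ^ 3 / 6)) ≤ perim x * (δ * Real.sin δ) := by gcongr
  have h4 : (2 - 2 * Real.cos δ) * B ≤ δ ^ 2 * B := by gcongr; linarith
  have h5 : δ ^ 2 * (perim x * (1 - δ ^ 2 / 6)) ≤ δ ^ 2 * B := by
    calc _ = perim x * (δ * (δ - δ ^ 3 / 6)) := by ring
      _ ≤ _ := h3.trans (h2.trans h4)
  exact le_of_mul_le_mul_left h5 (by positivity)

/-! ### The upper bound -/

lemma dirDot_eq (z : ℂ) (θ : ℝ) : dirDot z θ = ‖z‖ * Real.cos (θ - z.arg) := by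
  rw [Real.cos_sub]
  have h1 := Complex.norm_mul_cos_arg z
  have h2 := Complex.norm_mul_sin_arg z
  unfold dirDot
  linear_combination -Real.cos θ * h1 - Real.sin θ * h2

/-- This is `max gᵢ ≤ c + ∑ (gᵢ - c)⁺` for `gᵢ θ = ⟨xᵢ, e^{iθ}⟩ = ‖xᵢ‖ cos (θ - arg xᵢ)`; as
`c ≥ 0`, replacing `‖xᵢ‖ ≤ 1` by `1` only increases `(gᵢ - c)⁺`. -/
lemma supp_le {n : ℕ} (hn : 0 < n) {x : Fin n → ℂ} (hx : ∀ i, ‖x i‖ ≤ 1) {c : ℝ} (hc : 0 ≤ c)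
    (θ : ℝ) : supp x θ ≤ c + ∑ i, max (Real.cos (θ - (x i).arg) - c) 0 := by
  obtain ⟨i, hi⟩ := exists_supp_eq hn x θ
  have h1 : dirDot (x i) θ ≤ c + max (Real.cos (θ - (x i).arg) - c) 0 := by
    rw [dirDot_eq]
    have := norm_nonneg (x i)
    have := hx i
    rcases le_total (Real.cos (θ - (x i).arg)) 0 with h | h
    · nlinarith [le_max_right (Real.cos (θ - (x i).arg) - c) 0]
    · nlinarith [le_max_left (Real.cos (θ - (x i).arg) - c) 0]
  have h2 : max (Real.cos (θ - (x i).arg) - c) 0 ≤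
      ∑ i, max (Real.cos (θ - (x i).arg) - c) 0 :=
    Finset.single_le_sum (f := fun i => max (Real.cos (θ - (x i).arg) - c) 0)
      (fun i _ => le_max_right _ _) (Finset.mem_univ i)
  linarith

lemma integral_cap {α : ℝ} (h0 : 0 ≤ α) (h1 : α ≤ π) (a : ℝ) :
    ∫ θ in (0 : ℝ)..2 * π, max (Real.cos (θ - a) - Real.cos α) 0 =
      2 * Real.sin α - 2 * α * Real.cos α := by
  have hper : Function.Periodic (fun θ => max (Real.cos θ - Real.cos α) 0) (2 * π) := by
    intro θ; simp
  have hcont : Continuous fun θ => max (Real.cos θ - Real.cos α) 0 := by fun_prop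
  have hi : ∀ u v, IntervalIntegrable (fun θ => max (Real.cos θ - Real.cos α) 0) volume u v :=
    fun u v => hcont.intervalIntegrable u v
  have e := integral_shift hper (-a)
  have e2 := hper.intervalIntegral_add_eq (-π) 0
  rw [zero_add, show -π + 2 * π = π by ring] at e2
  simp only [← sub_eq_add_neg] at e
  rw [e, ← e2, ← intervalIntegral.integral_add_adjacent_intervals (hi (-π) (-α)) (hi (-α) π),
    ← intervalIntegral.integral_add_adjacent_intervals (hi (-α) α) (hi α π)]
  have m1 : ∫ θ in (-π)..(-α), max (Real.cos θ - Real.cos α) 0 = 0 := by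
    rw [intervalIntegral.integral_congr (g := fun _ => (0 : ℝ))]
    · simp
    · intro θ hθ
      rw [Set.uIcc_of_le (by linarith)] at hθ
      have := Real.cos_le_cos_of_nonneg_of_le_pi h0 (by linarith [hθ.1] : -θ ≤ π)
        (by linarith [hθ.2])
      rw [Real.cos_neg] at this
      exact max_eq_right (by linarith)
  have m3 : ∫ θ in α..π, max (Real.cos θ - Real.cos α) 0 = 0 := by
    rw [intervalIntegral.integral_congr (g := fun _ => (0 : ℝ))]
    · simp
    · intro θ hθ
      rw [Set.uIcc_of_le h1] at hθ
      have := Real.cos_le_cos_of_nonneg_of_le_pi h0 hθ.2 hθ.1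
      exact max_eq_right (by linarith)
  have m2 : ∫ θ in (-α)..α, max (Real.cos θ - Real.cos α) 0 =
      ∫ θ in (-α)..α, (Real.cos θ - Real.cos α) := by
    refine intervalIntegral.integral_congr fun θ hθ => ?_
    rw [Set.uIcc_of_le (by linarith)] at hθ
    have := Real.cos_le_cos_of_nonneg_of_le_pi (abs_nonneg θ) h1 (abs_le.2 hθ)
    rw [Real.cos_abs] at this
    exact max_eq_left (by linarith)
  rw [m1, m2, m3, intervalIntegral.integral_sub (Real.continuous_cos.intervalIntegrable _ _)
    (by simp)]
  simp
  ring

lemma perim_le {n : ℕ} (hn : 3 ≤ n) {x : Fin n → ℂ} (hx : ∀ i, ‖x i‖ ≤ 1) :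
    perim x ≤ 2 * n * Real.sin (π / n) := by
  have hn0 : 0 < n := by omega
  have hn3 : (3 : ℝ) ≤ n := by exact_mod_cast hn
  have hα0 : 0 ≤ π / n := by positivity
  have hα1 : π / n ≤ π / 2 := by
    apply div_le_div_of_nonneg_left <;> linarith [Real.pi_pos]
  have hc : 0 ≤ Real.cos (π / n) := Real.cos_nonneg_of_mem_Icc ⟨by linarith, hα1⟩
  refine (perim_le_integral hn0 x).trans ?_
  calc ∫ θ in (0 : ℝ)..2 * π, supp x θ
      ≤ ∫ θ in (0 : ℝ)..2 * π, (Real.cos (π / n) +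
          ∑ i, max (Real.cos (θ - (x i).arg) - Real.cos (π / n)) 0) :=
        intervalIntegral.integral_mono_on (by positivity)
          ((supp_continuous hn0 x).intervalIntegrable _ _)
          (Continuous.intervalIntegrable (by fun_prop) _ _) fun θ _ => supp_le hn0 hx hc θ
    _ = 2 * n * Real.sin (π / n) := by
      rw [intervalIntegral.integral_add (by simp)
        (Continuous.intervalIntegrable (by fun_prop) _ _),
        intervalIntegral.integral_finsetSum fun i _ =>
          Continuous.intervalIntegrable (by fun_prop) _ _]
      simp only [integral_cap hα0 (hα1.trans (by linarith [Real.pi_pos]))]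
      simp
      field_simp
      ring

/-! ### The regular polygon -/

/-- The vertex of angle `2πj/n`, for an arbitrary natural number `j`, so that the edge from the last
vertex back to the first is not exceptional. -/
def vtx (n j : ℕ) : ℂ := Complex.exp ((2 * π * (j : ℝ) / n : ℝ) * Complex.I)

/-- The angle of the outer normal of the edge from `vtx n j` to `vtx n (j + 1)`. -/
def nrm (n j : ℕ) : ℝ := (2 * j + 1) * π / n

lemma dirDot_vtx (n j : ℕ) (θ : ℝ) : dirDot (vtx n j) θ = Real.cos (θ - 2 * π * j / n) := by
  unfold dirDot vtx
  rw [Complex.exp_ofReal_mul_I_re, Complex.exp_ofReal_mul_I_im, Real.cos_sub]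
  ring

lemma vtx_mem (n j : ℕ) (hn : 0 < n) : vtx n j ∈ Set.range (regularVertices n) := by
  refine ⟨⟨j % n, Nat.mod_lt _ hn⟩, ?_⟩
  have hn' : (n : ℂ) ≠ 0 := by exact_mod_cast hn.ne'
  have e : (j : ℂ) = (j % n : ℕ) + n * (j / n : ℕ) := by exact_mod_cast (Nat.mod_add_div j n).symm
  unfold regularVertices vtx
  rw [Complex.exp_eq_exp_iff_exists_int]
  refine ⟨-((j / n : ℕ) : ℤ), ?_⟩
  simp only [Int.cast_neg, Int.cast_natCast, Complex.ofReal_div, Complex.ofReal_mul,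
    Complex.ofReal_natCast, Complex.ofReal_ofNat]
  rw [e]
  field_simp
  ring

/-- All vertices lie in the half-plane bounded by the line through an edge. -/
lemma dirDot_vtx_le {n : ℕ} (i j : Fin n) :
    dirDot (regularVertices n i) (nrm n j) ≤ Real.cos (π / n) := by
  have hn0 : 0 < n := i.pos
  have hn1 : (1 : ℝ) ≤ n := by exact_mod_cast hn0
  have hn' : (n : ℝ) ≠ 0 := by positivity
  have hpi := Real.pi_pos
  change dirDot (vtx n i) _ ≤ _
  rw [dirDot_vtx]
  -- `d` is an odd integer, so `1 ≤ |d| ≤ 2n - 1`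
  set d : ℤ := 2 * j + 1 - 2 * i with hd
  have e : nrm n j - 2 * π * i / n = d * (π / n) := by
    rw [hd]; unfold nrm; push_cast; field_simp
  have hi := i.2
  have hj := j.2
  have hd1 : 1 ≤ |d| := Int.one_le_abs (by omega)
  have hd2 : |d| ≤ 2 * n - 1 := abs_le.2 ⟨by omega, by omega⟩
  have hd1' : (1 : ℝ) ≤ |(d : ℝ)| := by exact_mod_cast hd1
  have hd2' : |(d : ℝ)| ≤ 2 * n - 1 := by exact_mod_cast hd2
  have hα : 0 < π / n := by positivity
  have hnα : n * (π / n) = π := by field_simp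
  rw [e, ← Real.cos_abs, abs_mul, abs_of_pos hα]
  rcases le_total (|(d : ℝ)|) n with h | h
  · exact Real.cos_le_cos_of_nonneg_of_le_pi hα.le (by nlinarith) (by nlinarith)
  · rw [← Real.cos_two_pi_sub]
    exact Real.cos_le_cos_of_nonneg_of_le_pi hα.le (by nlinarith) (by nlinarith)

lemma dirDot_edge (n j : ℕ) {z : ℂ} (hz : z ∈ segment ℝ (vtx n j) (vtx n (j + 1))) :
    dirDot z (nrm n j) = Real.cos (π / n) := by
  have h1 : dirDot (vtx n j) (nrm n j) = Real.cos (π / n) := by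
    rw [dirDot_vtx]; unfold nrm; congr 1; ring
  have h2 : dirDot (vtx n (j + 1)) (nrm n j) = Real.cos (π / n) := by
    rw [dirDot_vtx, ← Real.cos_neg]; unfold nrm; congr 1; push_cast; ring
  obtain ⟨u, v, -, -, huv, rfl⟩ := hz
  simp only [dirDot, Complex.add_re, Complex.add_im, Complex.real_smul, Complex.mul_re,
    Complex.mul_im, Complex.ofReal_re, Complex.ofReal_im] at *
  linear_combination u * h1 + v * h2 + Real.cos (π / n) * huv

/-- A point of `K` at which the linear form `⟨·, e^{iθ}⟩` attains its maximum over `K` is a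
boundary point. -/
lemma mem_frontier_of_max {K : Set ℂ} {z : ℂ} {θ : ℝ} (hz : z ∈ K)
    (h : ∀ w ∈ K, dirDot w θ ≤ dirDot z θ) : z ∈ frontier K := by
  refine ⟨subset_closure hz, fun hint => ?_⟩
  have hcont : Continuous fun ε : ℝ => z + ε * Complex.exp (θ * Complex.I) := by fun_prop
  have h0 : ∀ᶠ ε : ℝ in 𝓝 0, z + ε * Complex.exp (θ * Complex.I) ∈ K := by
    refine hcont.continuousAt.eventually_mem ?_
    simpa using mem_interior_iff_mem_nhds.1 hint
  obtain ⟨ε, hεK, hε⟩ := ((h0.filter_mono nhdsWithin_le_nhds).and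
    (self_mem_nhdsWithin : Set.Ioi (0 : ℝ) ∈ 𝓝[>] 0)).exists
  have h1 := h _ hεK
  have h2 : dirDot (z + ε * Complex.exp (θ * Complex.I)) θ = dirDot z θ + ε := by
    simp only [dirDot, Complex.add_re, Complex.add_im, Complex.mul_re, Complex.mul_im,
      Complex.ofReal_re, Complex.ofReal_im, Complex.exp_ofReal_mul_I_re,
      Complex.exp_ofReal_mul_I_im]
    linear_combination ε * Real.sin_sq_add_cos_sq θ
  have : (0 : ℝ) < ε := hε
  linarith

lemma edge_subset_frontier {n : ℕ} (j : Fin n) : segment ℝ (vtx n j) (vtx n (j + 1)) ⊆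
    frontier (convexHull ℝ (Set.range (regularVertices n))) := by
  intro z hz
  have hsub := (convex_convexHull ℝ (Set.range (regularVertices n))).segment_subset
    (subset_convexHull ℝ _ (vtx_mem n j j.pos)) (subset_convexHull ℝ _ (vtx_mem n (j + 1) j.pos))
  refine mem_frontier_of_max (θ := nrm n j) (hsub hz) fun w hw => ?_
  rw [dirDot_edge n j hz]
  exact dirDot_le_of_mem_hull (by rintro _ ⟨i, rfl⟩; exact dirDot_vtx_le i j) hw

/-- Two distinct edges meet in at most one point: they lie on lines that either cross, or are
parallel and lie on opposite sides of the origin. -/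
lemma edge_inter_subsingleton {n : ℕ} (hn : 3 ≤ n) {j k : Fin n} (hjk : j ≠ k) :
    (segment ℝ (vtx n j) (vtx n (j + 1)) ∩ segment ℝ (vtx n k) (vtx n (k + 1))).Subsingleton := by
  have hn3 : (3 : ℝ) ≤ n := by exact_mod_cast hn
  have hpi := Real.pi_pos
  have hα : π / n < π / 2 := by
    apply div_lt_div_of_pos_left <;> linarith
  have hα0 : 0 < π / n := by positivity
  have hc : 0 < Real.cos (π / n) := Real.cos_pos_of_mem_Ioo ⟨by linarith, hα⟩
  rintro z ⟨hzj, hzk⟩ w ⟨hwj, hwk⟩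
  have a1 := dirDot_edge n j hzj
  have a2 := dirDot_edge n k hzk
  have b1 := dirDot_edge n j hwj
  have b2 := dirDot_edge n k hwk
  by_cases hs : Real.sin (nrm n j - nrm n k) = 0
  · exfalso
    obtain ⟨m, hm⟩ := Real.sin_eq_zero_iff.1 hs
    have hmn : m * n = 2 * ((j : ℤ) - k) := by
      have : (m : ℝ) * n = 2 * ((j : ℝ) - k) := by
        apply mul_right_cancel₀ hpi.ne'
        unfold nrm at hm
        field_simp at hm
        linear_combination π * hm
      exact_mod_cast this
    have hj := j.2
    have hk := k.2
    have hjk' : (j : ℤ) ≠ k := fun h => hjk (Fin.ext (by exact_mod_cast h))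
    have h1 : m < 2 := by by_contra! h; nlinarith
    have h2 : -2 < m := by by_contra! h; nlinarith
    have h0 : m ≠ 0 := by rintro rfl; omega
    have hneg : dirDot z (nrm n j) = -dirDot z (nrm n k) := by
      have e : nrm n j = nrm n k + m * π := by linarith
      rw [e]
      obtain rfl | rfl : m = 1 ∨ m = -1 := by omega
      · simp [dirDot]; ring
      · simp [dirDot, ← sub_eq_add_neg]; ring
    linarith
  · simp only [dirDot] at a1 a2 b1 b2
    have r := Real.sin_sub (nrm n j) (nrm n k)
    apply Complex.ext
    · apply mul_left_cancel₀ hs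
      rw [r]
      linear_combination Real.sin (nrm n j) * (a2 - b2) - Real.sin (nrm n k) * (a1 - b1)
    · apply mul_left_cancel₀ hs
      rw [r]
      linear_combination Real.cos (nrm n k) * (a1 - b1) - Real.cos (nrm n j) * (a2 - b2)

lemma edge_length (n j : ℕ) (hn : 3 ≤ n) : edist (vtx n j) (vtx n (j + 1)) =
    ENNReal.ofReal (2 * Real.sin (π / n)) := by
  have hn3 : (3 : ℝ) ≤ n := by exact_mod_cast hn
  have hs : 0 ≤ Real.sin (π / n) := Real.sin_nonneg_of_nonneg_of_le_pi (by positivity)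
    (div_le_self Real.pi_pos.le (by linarith))
  rw [edist_dist]
  congr 1
  have e : vtx n j - vtx n (j + 1) = -(2 * Complex.I * (Real.sin (π / n) : ℝ) *
      Complex.exp ((nrm n j : ℝ) * Complex.I)) := by
    have e1 : vtx n j = Complex.exp ((nrm n j : ℝ) * Complex.I) *
        Complex.exp (-((π / n : ℝ) : ℂ) * Complex.I) := by
      rw [← Complex.exp_add]; unfold vtx nrm; congr 1; push_cast; ring
    have e2 : vtx n (j + 1) = Complex.exp ((nrm n j : ℝ) * Complex.I) *
        Complex.exp (((π / n : ℝ) : ℂ) * Complex.I) := by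
      rw [← Complex.exp_add]; unfold vtx nrm; congr 1; push_cast; ring
    rw [e1, e2, Complex.exp_mul_I (-_), Complex.exp_mul_I ((π / n : ℝ) : ℂ), Complex.cos_neg, Complex.sin_neg,
      Complex.ofReal_sin]
    ring
  rw [dist_eq_norm, e, norm_neg, norm_mul, norm_mul, norm_mul, Complex.norm_exp_ofReal_mul_I,
    Complex.norm_real, Real.norm_of_nonneg hs]
  simp

/-- The boundary of the regular `n`-gon contains its `n` edges. -/
lemma le_measure_regular {n : ℕ} (hn : 3 ≤ n) : ENNReal.ofReal (2 * n * Real.sin (π / n)) ≤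
    μH[1] (frontier (convexHull ℝ (Set.range (regularVertices n)))) := by
  calc ENNReal.ofReal (2 * n * Real.sin (π / n))
      = ∑ j : Fin n, μH[1] (segment ℝ (vtx n j) (vtx n (j + 1))) := by
        simp only [hausdorffMeasure_segment, edge_length n _ hn]
        rw [Finset.sum_const, Finset.card_univ, Fintype.card_fin, nsmul_eq_mul,
          ← ENNReal.ofReal_natCast, ← ENNReal.ofReal_mul (Nat.cast_nonneg n)]
        congr 1; ring
    _ = μH[1] (⋃ j ∈ (Finset.univ : Finset (Fin n)), segment ℝ (vtx n j) (vtx n (j + 1))) := by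
        refine (measure_biUnion_finset₀ ?_ ?_).symm
        · intro j _ k _ hjk
          have := Measure.nullSingletonClass_hausdorff ℂ (d := 1) one_pos
          exact (edge_inter_subsingleton hn hjk).measure_zero _
        · intro j _
          have : IsCompact (segment ℝ (vtx n j) (vtx n (j + 1))) := by
            rw [← convexHull_pair]
            exact (Set.toFinite _).isCompact_convexHull ℝ
          exact this.isClosed.measurableSet.nullMeasurableSet
    _ ≤ _ := measure_mono (Set.iUnion₂_subset fun j _ => edge_subset_frontier j)

/-- Among `n` points of the closed unit disk, the perimeter of the convex hull is at most
`2n·sin(π/n)`, with equality for the vertices of the regular inscribed `n`-gon. -/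
theorem stmt13 (n : ℕ) (hn : 3 ≤ n) (x : Fin n → ℂ) (hx : ∀ i, ‖x i‖ ≤ 1) :
    perim x ≤ 2 * n * Real.sin (π / n) ∧
      perim (regularVertices n) = 2 * n * Real.sin (π / n) := by
  refine ⟨perim_le hn hx, le_antisymm (perim_le hn fun i => ?_) ?_⟩
  · exact (Complex.norm_exp_ofReal_mul_I _).le
  -- `perim` is a `toReal`, so the measure has to be known to be finite
  · refine (ENNReal.ofReal_le_iff_le_toReal ?_).1 (le_measure_regular hn)
    exact ne_top_of_le_ne_top ENNReal.ofReal_ne_top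
      (hull_measure_le (by omega) (regularVertices n) one_pos 0)
end
end

section
/- Let n ≥ 3 and let x_1,…,x_n be points of the closed unit disk B² ⊂ ℝ². Then the area of their convex hull satisfies area([x_1,…,x_n]) ≤ (n/2)·sin(2π/n), and equality holds when x_1,…,x_n are the vertices of a regular n-gon inscribed in the unit circle. -/
/-!
Order the points by argument; each lies on the segment from `0` to a point of the unit circle. If
every angular gap `g k` between cyclically consecutive points is below `π`, the hull is covered by
the triangles spanned by `0` and two consecutive points of the circle (`cover`), which have area
`sin (g k) / 2`. As the gaps sum to `2π`, concavity of the sine on `[0, π]` gives the bound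
(`sum_sin_le`).

If some gap is at least `π`, the points lie in a half-disk, so the area is at most `π / 2`
(`volume_half`); for `n ≥ 4` the claimed bound is at least `2`. This last step fails for `n = 3`,
where the area of a triangle is instead bounded by Weitzenböck's inequality (`volume_hull_three`).

For the regular polygon the `n` central triangles over the sides lie inside the polygon and are
disjoint up to null sets (`lower`), so the upper bound is attained.
-/


open MeasureTheory Real Filter Topology

noncomputable section

/-- The area of the convex hull of a finite family of points in the plane:
its two-dimensional Lebesgue measure. -/
def hullArea {m : ℕ} (x : Fin m → ℂ) : ℝ :=
  (volume (convexHull ℝ (Set.range x))).toReal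

/-! ### Triangles with a vertex at the origin -/

/-- The closed triangle with vertices `0`, `u`, `v`. -/
def tri (u v : ℂ) : Set ℂ :=
  {z | ∃ s t : ℝ, 0 ≤ s ∧ 0 ≤ t ∧ s + t ≤ 1 ∧ z = s * u + t * v}

/-- The real-linear map sending `1` to `u` and `I` to `v`. -/
def frameMap (u v : ℂ) : ℂ →ₗ[ℝ] ℂ where
  toFun z := z.re * u + z.im * v
  map_add' := by intro a b; simp; ring
  map_smul' := by intro a b; simp; ring

lemma det_frameMap (u v : ℂ) :
    LinearMap.det (frameMap u v) = u.re * v.im - u.im * v.re := by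
  rw [← LinearMap.det_toMatrix Complex.basisOneI, Matrix.det_fin_two]
  simp [LinearMap.toMatrix_apply, frameMap]
  ring

lemma tri_eq_image (u v : ℂ) : tri u v = frameMap u v '' tri 1 Complex.I := by
  ext z
  constructor
  · rintro ⟨s, t, hs, ht, hst, rfl⟩
    exact ⟨s * 1 + t * Complex.I, ⟨s, t, hs, ht, hst, rfl⟩, by simp [frameMap]⟩
  · rintro ⟨_, ⟨s, t, hs, ht, hst, rfl⟩, rfl⟩
    exact ⟨s, t, hs, ht, hst, by simp [frameMap]⟩

lemma convex_tri (u v : ℂ) : Convex ℝ (tri u v) := by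
  rintro _ ⟨s, t, hs, ht, hst, rfl⟩ _ ⟨s', t', hs', ht', hst', rfl⟩ a b ha hb hab
  refine ⟨a * s + b * s', a * t + b * t', by positivity, by positivity, ?_, ?_⟩
  · nlinarith
  · simp; ring

/-- The standard triangle, integrated over its vertical slices of length `1 - x`. -/
lemma volume_tri_one_I : volume (tri 1 Complex.I) = ENNReal.ofReal (1 / 2) := by
  have hS : MeasurableSet {p : ℝ × ℝ | 0 ≤ p.1 ∧ 0 ≤ p.2 ∧ p.1 + p.2 ≤ 1} := by
    apply IsClosed.measurableSet
    apply IsClosed.and (isClosed_le (by fun_prop) (by fun_prop))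
    exact IsClosed.and (isClosed_le (by fun_prop) (by fun_prop))
      (isClosed_le (by fun_prop) (by fun_prop))
  have h1 : tri 1 Complex.I = Complex.measurableEquivRealProd ⁻¹'
      {p : ℝ × ℝ | 0 ≤ p.1 ∧ 0 ≤ p.2 ∧ p.1 + p.2 ≤ 1} := by
    ext z
    constructor
    · rintro ⟨s, t, hs, ht, hst, rfl⟩
      simpa [Complex.measurableEquivRealProd] using ⟨hs, ht, hst⟩
    · rintro ⟨h1, h2, h3⟩
      exact ⟨z.re, z.im, h1, h2, h3, by simp⟩
  rw [h1, Complex.volume_preserving_equiv_real_prod.measure_preimage hS.nullMeasurableSet,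
    Measure.volume_eq_prod, Measure.prod_apply hS]
  have h2 : ∀ x : ℝ, volume (Prod.mk x ⁻¹' {p : ℝ × ℝ | 0 ≤ p.1 ∧ 0 ≤ p.2 ∧ p.1 + p.2 ≤ 1})
      = (Set.Icc (0 : ℝ) 1).indicator (fun x => ENNReal.ofReal (1 - x)) x := by
    intro x
    by_cases hx : x ∈ Set.Icc (0 : ℝ) 1
    · have : Prod.mk x ⁻¹' {p : ℝ × ℝ | 0 ≤ p.1 ∧ 0 ≤ p.2 ∧ p.1 + p.2 ≤ 1}
          = Set.Icc 0 (1 - x) := by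
        ext y
        simp only [Set.mem_preimage, Set.mem_ofPred_eq, Set.mem_Icc]
        constructor
        · rintro ⟨_, h, h'⟩; exact ⟨h, by linarith⟩
        · rintro ⟨h, h'⟩; exact ⟨hx.1, h, by linarith⟩
      rw [this, Set.indicator_of_mem hx]; simp
    · have : Prod.mk x ⁻¹' {p : ℝ × ℝ | 0 ≤ p.1 ∧ 0 ≤ p.2 ∧ p.1 + p.2 ≤ 1} = ∅ := by
        ext y
        simp only [Set.mem_preimage, Set.mem_ofPred_eq, Set.mem_empty_iff_false, iff_false]
        rintro ⟨h, h', h''⟩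
        exact hx ⟨h, by linarith⟩
      rw [this, Set.indicator_of_notMem hx]; simp
  simp_rw [h2]
  rw [lintegral_indicator measurableSet_Icc, ← ofReal_integral_eq_lintegral_ofReal]
  · rw [integral_Icc_eq_integral_Ioc, ← intervalIntegral.integral_of_le zero_le_one]
    congr 1
    rw [intervalIntegral.integral_sub (by simp) (by simp)]
    simp; norm_num
  · exact (by fun_prop : Continuous fun x : ℝ => 1 - x).integrableOn_Icc
  · filter_upwards [ae_restrict_mem measurableSet_Icc] with x hx
    simpa using hx.2

lemma volume_tri (u v : ℂ) :
    volume (tri u v) = ENNReal.ofReal (|u.re * v.im - u.im * v.re| / 2) := by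
  rw [tri_eq_image, Measure.addHaar_image_linearMap, det_frameMap, volume_tri_one_I,
    ← ENNReal.ofReal_mul (abs_nonneg _)]
  congr 1; ring

/-! ### Angles and covering by central triangles -/

/-- The point of the unit circle at angle `t`. -/
def cis (t : ℝ) : ℂ := Complex.exp (t * Complex.I)

@[simp] lemma cis_re (t : ℝ) : (cis t).re = cos t := by simp [cis, Complex.exp_ofReal_mul_I_re]
@[simp] lemma cis_im (t : ℝ) : (cis t).im = sin t := by simp [cis, Complex.exp_ofReal_mul_I_im]

/-- A central triangle of the unit circle with central angle `b - a ≤ π`. -/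
lemma volume_tri_cis (a b : ℝ) (h0 : a ≤ b) (h1 : b - a ≤ π) :
    volume (tri (cis a) (cis b)) = ENNReal.ofReal (sin (b - a) / 2) := by
  rw [volume_tri, cis_re, cis_im, cis_re, cis_im,
    show cos a * sin b - sin a * cos b = sin (b - a) by rw [sin_sub]; ring,
    abs_of_nonneg (sin_nonneg_of_nonneg_of_le_pi (by linarith) h1)]

lemma cos_le_of_mem {h d : ℝ} (h0 : 0 ≤ h) (h1 : h ≤ d) (h2 : d ≤ 2 * π - h) :
    cos d ≤ cos h := by
  rcases le_total d π with hd | hd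
  · exact cos_le_cos_of_nonneg_of_le_pi h0 hd h1
  · rw [← cos_two_pi_sub d]
    exact cos_le_cos_of_nonneg_of_le_pi h0 (by linarith) (by linarith)

/-- A linear inequality valid at the points is valid on their convex hull. -/
lemma convexHull_le {n : ℕ} {x : Fin n → ℂ} (p q c : ℝ)
    (h : ∀ i, p * (x i).re + q * (x i).im ≤ c) {z : ℂ}
    (hz : z ∈ convexHull ℝ (Set.range x)) : p * z.re + q * z.im ≤ c := by
  have hc : Convex ℝ {z : ℂ | p * z.re + q * z.im ≤ c} := by
    intro a ha b hb s t hs ht hst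
    simp only [Set.mem_ofPred_eq] at *
    simp only [Complex.add_re, Complex.add_im, Complex.smul_re, Complex.smul_im, smul_eq_mul]
    have := mul_le_mul_of_nonneg_left ha hs
    have := mul_le_mul_of_nonneg_left hb ht
    have : s * c + t * c = c := by rw [← add_mul, hst, one_mul]
    linarith
  exact convexHull_min (by rintro _ ⟨i, rfl⟩; exact h i) hc hz

lemma eq_norm_mul_cis_of_arg (z : ℂ) (θ : ℝ) (k : ℤ) (h : θ = Complex.arg z + k * (2 * π)) :
    z = ‖z‖ * cis θ := by
  conv_lhs => rw [← Complex.norm_mul_exp_arg_mul_I z]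
  congr 1
  rw [cis, Complex.exp_eq_exp_iff_exists_int]
  exact ⟨-k, by rw [h]; push_cast; ring⟩

lemma exists_angle (z : ℂ) (b : ℝ) : ∃ θ, b ≤ θ ∧ θ < b + 2 * π ∧ z = ‖z‖ * cis θ := by
  have h := toIcoMod_mem_Ico two_pi_pos b z.arg
  refine ⟨_, h.1, h.2, eq_norm_mul_cis_of_arg z _ (-toIcoDiv two_pi_pos b z.arg) ?_⟩
  rw [toIcoMod, zsmul_eq_mul]; push_cast; ring

/-- If points of the unit disk have angles `β 0 ≤ ⋯ ≤ β (n - 1)` with cyclic gaps all below `π`, then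
their hull is covered by the triangles spanned by `0` and angularly consecutive points of the unit
circle. A point `z` of the hull lies in the cone over some gap `[a, b]`, and all the points,
hence `z`, lie on the same side as `0` of the line through the endpoints of the arc over that gap. -/
lemma cover {n : ℕ} {β : ℕ → ℝ} (hm : Monotone β) (hβ : β n = β 0 + 2 * π)
    (hgap : ∀ k < n, β (k + 1) - β k < π) {x : Fin n → ℂ} (hx : ∀ i, ‖x i‖ ≤ 1)
    (hxβ : ∀ i, x i = ‖x i‖ * cis (β i)) {z : ℂ} (hz : z ∈ convexHull ℝ (Set.range x)) :
    ∃ k < n, z ∈ tri (cis (β k)) (cis (β (k + 1))) := by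
  obtain ⟨θ, h0, h1, hzθ⟩ := exists_angle z (β 0)
  obtain ⟨k, hk, hk1, hk2⟩ : ∃ k < n, β k ≤ θ ∧ θ < β (k + 1) := by
    by_contra! H
    have : ∀ k ≤ n, β k ≤ θ := by
      intro k
      induction k with
      | zero => intro _; exact h0
      | succ k ih => intro hk; exact H k hk (ih (by omega))
    have := this n le_rfl
    linarith
  refine ⟨k, hk, ?_⟩
  set a := β k
  set b := β (k + 1)
  have hg := hgap k hk
  have hs : 0 < sin (b - a) := sin_pos_of_pos_of_lt_pi (by linarith) hg
  have hc : 0 < cos ((b - a) / 2) := cos_pos_of_mem_Ioo ⟨by linarith [pi_pos], by linarith⟩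
  have hkey : cos ((a + b) / 2) * z.re + sin ((a + b) / 2) * z.im ≤ cos ((b - a) / 2) := by
    refine convexHull_le _ _ _ (fun j => ?_) hz
    have hcos : cos (β j - (a + b) / 2) ≤ cos ((b - a) / 2) := by
      have e1 : β 0 ≤ β j := hm (Nat.zero_le _)
      have e2 : β j ≤ β n := hm j.2.le
      have e3 : β 0 ≤ a := hm (Nat.zero_le _)
      have e4 : b ≤ β n := hm hk
      rcases Nat.lt_or_ge k j with hj | hj
      · have : b ≤ β j := hm hj
        exact cos_le_of_mem (by linarith) (by linarith) (by linarith)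
      · have : β j ≤ a := hm hj
        rw [← cos_neg]
        exact cos_le_of_mem (by linarith) (by linarith) (by linarith)
    have e : cos ((a + b) / 2) * (x j).re + sin ((a + b) / 2) * (x j).im
        = ‖x j‖ * cos (β j - (a + b) / 2) := by
      conv_lhs => rw [hxβ j]
      simp only [Complex.re_ofReal_mul, Complex.im_ofReal_mul, cis_re, cis_im, cos_sub]
      ring
    rw [e]
    have := norm_nonneg (x j)
    have := hx j
    nlinarith
  set r := ‖z‖
  have hr : 0 ≤ r := norm_nonneg z
  refine ⟨r * sin (b - θ) / sin (b - a), r * sin (θ - a) / sin (b - a), ?_, ?_, ?_, ?_⟩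
  · have := sin_nonneg_of_nonneg_of_le_pi (x := b - θ) (by linarith) (by linarith)
    positivity
  · have := sin_nonneg_of_nonneg_of_le_pi (x := θ - a) (by linarith) (by linarith)
    positivity
  · rw [hzθ] at hkey
    have e : cos ((a + b) / 2) * (r * cis θ).re + sin ((a + b) / 2) * (r * cis θ).im
        = r * cos (θ - (a + b) / 2) := by
      simp only [Complex.re_ofReal_mul, Complex.im_ofReal_mul, cis_re, cis_im, cos_sub]
      ring
    rw [e] at hkey
    have e1 : sin (b - θ) + sin (θ - a) = 2 * sin ((b - a) / 2) * cos (θ - (a + b) / 2) := by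
      rw [show b - θ = (b - a) / 2 - (θ - (a + b) / 2) by ring,
        show θ - a = (b - a) / 2 + (θ - (a + b) / 2) by ring, sin_sub, sin_add]; ring
    have e2 : sin (b - a) = 2 * sin ((b - a) / 2) * cos ((b - a) / 2) := by
      rw [← sin_two_mul]; congr 1; ring
    rw [← add_div, ← mul_add, e1, div_le_one hs, e2]
    have : 0 < sin ((b - a) / 2) := sin_pos_of_pos_of_lt_pi (by linarith) (by linarith)
    nlinarith
  · rw [hzθ]
    have e : sin (b - a) ≠ 0 := hs.ne'
    apply Complex.ext
    · simp only [Complex.add_re, Complex.re_ofReal_mul, cis_re]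
      field_simp
      rw [sin_sub b a, sin_sub b θ, sin_sub θ a]; ring
    · simp only [Complex.add_im, Complex.im_ofReal_mul, cis_im]
      field_simp
      rw [sin_sub b a, sin_sub b θ, sin_sub θ a]; ring

/-! ### Upper bound -/

lemma sum_sin_le {n : ℕ} (hn : 0 < n) {g : ℕ → ℝ} (h0 : ∀ k < n, 0 ≤ g k)
    (h1 : ∀ k < n, g k ≤ π) (hs : ∑ k ∈ Finset.range n, g k = 2 * π) :
    ∑ k ∈ Finset.range n, sin (g k) ≤ n * sin (2 * π / n) := by
  have hn' : (0 : ℝ) < n := by exact_mod_cast hn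
  have := strictConcaveOn_sin_Icc.concaveOn.le_map_sum (t := Finset.range n)
    (w := fun _ => (1 : ℝ) / n) (p := g) (fun _ _ => by positivity)
    (by simp; field_simp) (fun k hk => ⟨h0 k (by simpa using hk), h1 k (by simpa using hk)⟩)
  simp only [smul_eq_mul, ← Finset.mul_sum, hs] at this
  rw [show 1 / (n : ℝ) * (2 * π) = 2 * π / n by ring, one_div, inv_mul_le_iff₀ hn'] at this
  exact this

/-- The real-linear functional whose kernel is the line through `0` at angle `a`. -/
def lineForm (a : ℝ) : ℂ →ₗ[ℝ] ℝ := cos a • Complex.imLm - sin a • Complex.reLm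

lemma lineForm_apply (a : ℝ) (z : ℂ) : lineForm a z = cos a * z.im - sin a * z.re := by
  simp [lineForm]

lemma lineForm_cis (a b : ℝ) : lineForm a (cis b) = sin (b - a) := by
  rw [lineForm_apply, cis_re, cis_im, sin_sub]; ring

lemma volume_line (a : ℝ) : volume {z : ℂ | lineForm a z = 0} = 0 := by
  refine Measure.addHaar_submodule volume (LinearMap.ker (lineForm a)) ?_
  intro h
  have : cis (a + π / 2) ∈ LinearMap.ker (lineForm a) := by rw [h]; trivial
  rw [LinearMap.mem_ker, lineForm_cis] at this
  simp at this

lemma convexHull_subset_closedBall {n : ℕ} {x : Fin n → ℂ} (hx : ∀ i, ‖x i‖ ≤ 1) :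
    convexHull ℝ (Set.range x) ⊆ Metric.closedBall 0 1 :=
  convexHull_min (by rintro _ ⟨i, rfl⟩; simpa using hx i) (convex_closedBall 0 1)

open scoped Pointwise in
/-- A hull contained in a half-disk has area at most `π / 2`: it meets its reflection through `0` only
along a line, and both lie in the unit disk. -/
lemma volume_half {n : ℕ} {x : Fin n → ℂ} (hx : ∀ i, ‖x i‖ ≤ 1) (a : ℝ)
    (ha : ∀ i, lineForm a (x i) ≤ 0) :
    volume (convexHull ℝ (Set.range x)) ≤ ENNReal.ofReal (π / 2) := by
  set K := convexHull ℝ (Set.range x) with hK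
  have hKa : ∀ z ∈ K, lineForm a z ≤ 0 := by
    intro z hz
    have := convexHull_le (-sin a) (cos a) 0
      (fun i => by have := ha i; rw [lineForm_apply] at this; linarith) hz
    rw [lineForm_apply]; linarith
  have hKm : NullMeasurableSet (-K) :=
    ((convex_convexHull ℝ (Set.range x)).neg).nullMeasurableSet volume
  have hdis : AEDisjoint volume K (-K) := by
    refine measure_mono_null ?_ (volume_line a)
    rintro z ⟨h1, h2⟩
    have h3 := hKa z h1
    have h4 := hKa (-z) h2
    rw [map_neg] at h4
    exact le_antisymm h3 (by linarith)
  have hsum := measure_union₀ hKm hdis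
  have hball : volume (K ∪ -K) ≤ volume (Metric.closedBall (0 : ℂ) 1) := by
    apply measure_mono
    have := convexHull_subset_closedBall hx
    rintro z (h | h)
    · exact this h
    · simpa using this h
  rw [hsum, Measure.measure_neg, Complex.volume_closedBall, ← two_mul] at hball
  rw [ENNReal.ofReal_div_of_pos two_pos, ENNReal.le_div_iff_mul_le (by simp) (by simp), mul_comm]
  simpa [← NNReal.coe_real_pi] using hball

open scoped Pointwise in
/-- The case of triangles. With `A` the area, Weitzenböck's inequality bounds `4√3 A` by the sum
of the squared sides, which is `3 ∑ ‖x i‖² - ‖∑ x i‖² ≤ 9`. -/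
lemma volume_hull_three {x : Fin 3 → ℂ} (hx : ∀ i, ‖x i‖ ≤ 1) :
    volume (convexHull ℝ (Set.range x)) ≤ ENNReal.ofReal (3 * √3 / 4) := by
  have hsub : convexHull ℝ (Set.range x) ⊆ x 0 +ᵥ tri (x 1 - x 0) (x 2 - x 0) := by
    apply convexHull_min _ ((convex_tri _ _).vadd _)
    rintro _ ⟨i, rfl⟩
    rw [Set.mem_vadd_set]
    fin_cases i
    · exact ⟨0, ⟨0, 0, by simp⟩, by simp⟩
    · exact ⟨x 1 - x 0, ⟨1, 0, by simp⟩, by simp⟩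
    · exact ⟨x 2 - x 0, ⟨0, 1, by simp⟩, by simp⟩
  refine (measure_mono hsub).trans ?_
  rw [measure_vadd, volume_tri]
  apply ENNReal.ofReal_le_ofReal
  have hsq : ∀ i, (x i).re ^ 2 + (x i).im ^ 2 ≤ 1 := by
    intro i
    have h1 := hx i
    have h2 := Complex.sq_norm (x i)
    rw [Complex.normSq_apply] at h2
    nlinarith [norm_nonneg (x i)]
  have h0 := hsq 0
  have h1 := hsq 1
  have h2 := hsq 2
  have h3 : √3 ^ 2 = 3 := Real.sq_sqrt (by norm_num)
  have h3p : 0 < √3 := by positivity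
  simp only [Complex.sub_re, Complex.sub_im]
  set a := (x 0).re
  set b := (x 0).im
  set c := (x 1).re
  set d := (x 1).im
  set e := (x 2).re
  set f := (x 2).im
  -- Both signs of `s = ±√3` are needed, as the orientation of the triangle is unknown.
  have key : ∀ s : ℝ, s ^ 2 = 3 →
      2 * s * ((c - a) * (f - b) - (d - b) * (e - a)) ≤ 9 := by
    intro s hs
    -- Weitzenböck's inequality; the two squares vanish for equilateral triangles
    -- whose orientation matches the sign of `s`.
    have w : 2 * s * ((c - a) * (f - b) - (d - b) * (e - a)) ≤
        (c - a) ^ 2 + (d - b) ^ 2 + (e - a) ^ 2 + (f - b) ^ 2 + (e - c) ^ 2 + (f - d) ^ 2 := by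
      nlinarith [sq_nonneg (2 * (c - a) - (e - a) - s * (f - b)),
        sq_nonneg (2 * (d - b) - (f - b) + s * (e - a))]
    nlinarith [sq_nonneg (a + c + e), sq_nonneg (b + d + f)]
  have k1 := key √3 h3
  have k2 := key (-√3) (by rw [neg_sq, h3])
  have : |(c - a) * (f - b) - (d - b) * (e - a)| ≤ 3 * √3 / 2 := by
    rw [abs_le]
    constructor <;> nlinarith
  linarith

/-- For `n ≥ 4` the claimed bound exceeds the area of a half-disk. -/
lemma two_le_bound {n : ℕ} (hn : 4 ≤ n) : 2 ≤ (n : ℝ) / 2 * sin (2 * π / n) := by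
  have hn' : (4 : ℝ) ≤ n := by exact_mod_cast hn
  have := mul_le_sin (x := 2 * π / n) (by positivity)
    (by rw [div_le_iff₀ (by linarith)]; nlinarith [pi_pos])
  calc (2 : ℝ) = n / 2 * (2 / π * (2 * π / n)) := by field_simp
    _ ≤ _ := by gcongr

lemma three_bound : ((3 : ℕ) : ℝ) / 2 * sin (2 * π / (3 : ℕ)) = 3 * √3 / 4 := by
  have : sin (2 * π / (3 : ℕ)) = √3 / 2 := by
    rw [← sin_pi_div_three, ← sin_pi_sub (π / 3)]; congr 1; push_cast; ring
  rw [this]; push_cast; ring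

/-- The upper bound for at least four points listed by increasing argument. Without a gap of length at
least `π` the covering by central triangles applies; otherwise the points lie in a half-disk. -/
lemma upper_of_monotone {n : ℕ} (hn : 4 ≤ n) {x : Fin n → ℂ} (hx : ∀ i, ‖x i‖ ≤ 1)
    (hmono : Monotone fun i => (x i).arg) :
    volume (convexHull ℝ (Set.range x)) ≤ ENNReal.ofReal ((n : ℝ) / 2 * sin (2 * π / n)) := by
  have hn0 : 0 < n := by omega
  set α₀ := (x ⟨0, hn0⟩).arg with hα₀
  -- The angles, closed up cyclically: the first one reappears, shifted by `2π`, at index `n`.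
  let β : ℕ → ℝ := fun k => if h : k < n then (x ⟨k, h⟩).arg else α₀ + 2 * π
  have hβi : ∀ i : Fin n, β i = (x i).arg := fun i => by simp [β]
  have hβn : β n = β 0 + 2 * π := by simp [β, hn0, hα₀]
  have hm : Monotone β := by
    intro j k hjk
    simp only [β]
    split_ifs with h1 h2 h2
    · exact hmono hjk
    · have := Complex.arg_le_pi (x ⟨j, h1⟩)
      have := Complex.neg_pi_lt_arg (x ⟨0, hn0⟩)
      linarith
    · omega
    · exact le_rfl
  have hxβ : ∀ i, x i = ‖x i‖ * cis (β i) := fun i =>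
    eq_norm_mul_cis_of_arg _ _ 0 (by rw [hβi]; simp)
  by_cases hgap : ∀ k < n, β (k + 1) - β k < π
  · have hsub : convexHull ℝ (Set.range x) ⊆
        ⋃ k ∈ Finset.range n, tri (cis (β k)) (cis (β (k + 1))) := by
      intro z hz
      obtain ⟨k, hk, hz⟩ := cover hm hβn hgap hx hxβ hz
      simp only [Set.mem_iUnion, Finset.mem_range]
      exact ⟨k, hk, hz⟩
    have hnn : ∀ k < n, 0 ≤ β (k + 1) - β k := fun k _ => sub_nonneg.2 (hm k.le_succ)
    calc volume (convexHull ℝ (Set.range x))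
        ≤ ∑ k ∈ Finset.range n, volume (tri (cis (β k)) (cis (β (k + 1)))) :=
          (measure_mono hsub).trans (measure_biUnion_finset_le _ _)
      _ = ∑ k ∈ Finset.range n, ENNReal.ofReal (sin (β (k + 1) - β k) / 2) := by
          refine Finset.sum_congr rfl fun k hk => ?_
          exact volume_tri_cis _ _ (hm k.le_succ) (hgap k (by simpa using hk)).le
      _ = ENNReal.ofReal (∑ k ∈ Finset.range n, sin (β (k + 1) - β k) / 2) := by
          rw [ENNReal.ofReal_sum_of_nonneg]
          intro k hk
          have hk : k < n := by simpa using hk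
          have := sin_nonneg_of_nonneg_of_le_pi (hnn k hk) (hgap k hk).le
          positivity
      _ ≤ _ := by
          apply ENNReal.ofReal_le_ofReal
          have := sum_sin_le hn0 hnn (fun k hk => (hgap k hk).le)
            (by rw [Finset.sum_range_sub, hβn]; ring)
          rw [← Finset.sum_div]; linarith
  · push Not at hgap
    obtain ⟨k, hk, hg⟩ := hgap
    refine (volume_half hx (β k) fun j => ?_).trans (ENNReal.ofReal_le_ofReal ?_)
    · have e : lineForm (β k) (x j) = ‖x j‖ * sin (β j - β k) := by
        conv_lhs => rw [hxβ j]
        rw [← lineForm_cis, ← Complex.real_smul, map_smul, smul_eq_mul]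
      rw [e]
      apply mul_nonpos_of_nonneg_of_nonpos (norm_nonneg _)
      have e1 : β 0 ≤ β j := hm (Nat.zero_le _)
      have e2 : β j ≤ β n := hm j.2.le
      have e3 : β 0 ≤ β k := hm (Nat.zero_le _)
      have e4 : β (k + 1) ≤ β n := hm hk
      rcases Nat.lt_or_ge k j with hj | hj
      · have : β (k + 1) ≤ β j := hm hj
        rw [← sin_sub_two_pi]
        exact sin_nonpos_of_nonpos_of_neg_pi_le (by linarith) (by linarith)
      · have : β j ≤ β k := hm hj
        exact sin_nonpos_of_nonpos_of_neg_pi_le (by linarith) (by linarith)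
    · linarith [two_le_bound hn, pi_le_four]

lemma upper {n : ℕ} (hn : 3 ≤ n) {x : Fin n → ℂ} (hx : ∀ i, ‖x i‖ ≤ 1) :
    volume (convexHull ℝ (Set.range x)) ≤ ENNReal.ofReal ((n : ℝ) / 2 * sin (2 * π / n)) := by
  rcases hn.eq_or_lt with rfl | hn
  · rw [three_bound]; exact volume_hull_three hx
  · have := upper_of_monotone hn (x := x ∘ Tuple.sort fun i => (x i).arg) (fun i => hx _)
      (Tuple.monotone_sort fun i => (x i).arg)
    rwa [EquivLike.range_comp] at this

/-! ### The regular polygon -/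

/-- A central triangle without its far edge line lies in the half-open sector of its angles. -/
lemma exists_polar_of_mem_tri {a b : ℝ} (hab : a < b) (hb : b - a < π) {z : ℂ}
    (hz : z ∈ tri (cis a) (cis b)) (hzb : lineForm b z ≠ 0) :
    ∃ θ, a ≤ θ ∧ θ < b ∧ z = ‖z‖ * cis θ := by
  obtain ⟨θ, h0, h1, hθ⟩ := exists_angle z a
  refine ⟨θ, h0, ?_, hθ⟩
  obtain ⟨s, t, hs, ht, -, hst⟩ := hz
  have hlin : ∀ c, lineForm c z = s * sin (a - c) + t * sin (b - c) := by
    intro c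
    rw [hst, map_add, ← Complex.real_smul, ← Complex.real_smul, map_smul, map_smul,
      lineForm_cis, lineForm_cis, smul_eq_mul, smul_eq_mul]
  have hpol : ∀ c, lineForm c z = ‖z‖ * sin (θ - c) := by
    intro c
    conv_lhs => rw [hθ]
    rw [← Complex.real_smul, map_smul, lineForm_cis, smul_eq_mul]
  have hsin : 0 < sin (b - a) := sin_pos_of_pos_of_lt_pi (by linarith) hb
  have hA : 0 ≤ ‖z‖ * sin (θ - a) := by
    rw [← hpol, hlin]; simp; positivity
  have hB : ‖z‖ * sin (θ - b) < 0 := by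
    rw [← hpol]
    refine lt_of_le_of_ne ?_ hzb
    rw [hlin, ← neg_sub b a, sin_neg]; simp; positivity
  have hz0 : 0 < ‖z‖ := by
    rcases (norm_nonneg z).eq_or_lt with h | h
    · rw [← h] at hB; simp at hB
    · exact h
  have hA' : 0 ≤ sin (θ - a) := nonneg_of_mul_nonneg_right hA hz0
  have hB' : sin (θ - b) < 0 := by
    by_contra! h
    exact absurd hB (not_lt.2 (by positivity))
  by_contra! hbθ
  have : π < θ - b := by
    by_contra! h
    exact absurd hB' (not_lt.2 (sin_nonneg_of_nonneg_of_le_pi (by linarith) h))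
  have : sin (θ - a) < 0 := by
    rw [← sin_sub_two_pi]
    exact sin_neg_of_neg_of_neg_pi_lt (by linarith) (by linarith)
  linarith

lemma angle_unique {z : ℂ} (hz : z ≠ 0) {θ θ' : ℝ} (h : z = ‖z‖ * cis θ) (h' : z = ‖z‖ * cis θ')
    (h1 : θ < θ' + 2 * π) (h2 : θ' < θ + 2 * π) : θ = θ' := by
  have hc : cis θ = cis θ' := by
    have hz' : (‖z‖ : ℂ) ≠ 0 := by simpa using hz
    exact mul_left_cancel₀ hz' (h.symm.trans h')
  have hre := congrArg Complex.re hc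
  have him := congrArg Complex.im hc
  simp only [cis_re, cis_im] at hre him
  have : cos (θ - θ') = 1 := by rw [cos_sub, hre, him]; nlinarith [sin_sq_add_cos_sq θ']
  have := (cos_eq_one_iff_of_lt_of_lt (by linarith) (by linarith)).1 this
  linarith

lemma regularVertices_eq (n : ℕ) (j : Fin n) : regularVertices n j = cis (2 * π / n * (j : ℕ)) := by
  rw [regularVertices, cis]; congr 3; ring

/-- The centre is the mean of the vertices, because the `n`-th roots of unity sum to zero. -/
lemma zero_mem_hull {n : ℕ} (hn : 3 ≤ n) :
    (0 : ℂ) ∈ convexHull ℝ (Set.range (regularVertices n)) := by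
  have hsum : ∑ j : Fin n, regularVertices n j = 0 := by
    have hp := (Complex.isPrimitiveRoot_exp n (by omega)).geom_sum_eq_zero (by omega)
    rw [← hp, Finset.sum_range]
    refine Finset.sum_congr rfl fun j _ => ?_
    rw [regularVertices, ← Complex.exp_nat_mul]
    congr 1; push_cast; ring
  have hn0 : (n : ℝ) ≠ 0 := by positivity
  have := (convex_convexHull ℝ (Set.range (regularVertices n))).sum_mem
    (t := Finset.univ) (w := fun _ => (1 : ℝ) / n) (z := regularVertices n)
    (fun _ _ => by positivity) (by simp; field_simp)
    (fun i _ => subset_convexHull ℝ _ ⟨i, rfl⟩)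
  rwa [← Finset.smul_sum, hsum, smul_zero] at this

/-- The regular polygon contains the `n` central triangles over its sides, which overlap only along
lines through `0`. -/
lemma lower {n : ℕ} (hn : 3 ≤ n) :
    ENNReal.ofReal ((n : ℝ) / 2 * sin (2 * π / n)) ≤
      volume (convexHull ℝ (Set.range (regularVertices n))) := by
  have hn' : (3 : ℝ) ≤ n := by exact_mod_cast hn
  set a := 2 * π / n with ha
  have ha0 : 0 < a := by positivity
  have hna : n * a = 2 * π := by rw [ha]; field_simp
  have haπ : a < π := by nlinarith [pi_pos]
  let T : ℕ → Set ℂ := fun k => tri (cis (a * k)) (cis (a * (k + 1 : ℕ)))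
  have hstep : ∀ k : ℕ, a * (k + 1 : ℕ) - a * k = a := fun k => by push_cast; ring
  have hvert : ∀ k ≤ n, cis (a * k) ∈ convexHull ℝ (Set.range (regularVertices n)) := by
    intro k hk
    apply subset_convexHull
    rcases hk.eq_or_lt with rfl | hk
    · refine ⟨⟨0, by omega⟩, ?_⟩
      rw [regularVertices_eq]
      apply Complex.ext <;> simp [mul_comm a, hna]
    · exact ⟨⟨k, hk⟩, regularVertices_eq _ _⟩
  have hsub : ⋃ k ∈ Finset.range n, T k ⊆ convexHull ℝ (Set.range (regularVertices n)) := by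
    simp only [Set.iUnion_subset_iff, Finset.mem_range]
    rintro k hk _ ⟨s, t, hs, ht, hst, rfl⟩
    have := (convex_convexHull ℝ (Set.range (regularVertices n))).sum_mem
      (t := Finset.univ) (w := ![1 - s - t, s, t])
      (z := ![0, cis (a * k), cis (a * (k + 1 : ℕ))])
      (by intro i _; fin_cases i <;> simp <;> linarith)
      (by simp [Fin.sum_univ_three]; ring)
      (by
        intro i _
        fin_cases i
        · exact zero_mem_hull hn
        · exact hvert k hk.le
        · exact hvert (k + 1) hk)
    simpa [Fin.sum_univ_three] using this
  have hdis' : ∀ j < n, ∀ k < n, j < k → AEDisjoint volume (T j) (T k) := by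
    intro j hj k hk hjk
    refine measure_mono_null (t := {z | lineForm (a * (j + 1 : ℕ)) z = 0} ∪
      {z | lineForm (a * (k + 1 : ℕ)) z = 0}) ?_
      (measure_union_null (volume_line _) (volume_line _))
    rintro z ⟨hzj, hzk⟩
    by_contra hz
    simp only [Set.mem_union, Set.mem_ofPred_eq, not_or] at hz
    have hz0 : z ≠ 0 := by rintro rfl; simp at hz
    obtain ⟨θ, h1, h2, h3⟩ := exists_polar_of_mem_tri
      (by linarith [hstep j]) (by rw [hstep]; exact haπ) hzj hz.1
    obtain ⟨θ', h1', h2', h3'⟩ := exists_polar_of_mem_tri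
      (by linarith [hstep k]) (by rw [hstep]; exact haπ) hzk hz.2
    have c1 : a * (j + 1 : ℕ) ≤ a * k := by
      gcongr; exact hjk
    have c2 : a * (k + 1 : ℕ) ≤ a * n := by
      gcongr; exact hk
    have c3 : 0 ≤ a * j := by positivity
    have := angle_unique hz0 h3 h3' (by linarith [pi_pos]) (by linarith)
    linarith
  have hdis : Set.Pairwise (↑(Finset.range n)) (Function.onFun (AEDisjoint volume) T) := by
    intro j hj k hk hjk
    have hj : j < n := by simpa using hj
    have hk : k < n := by simpa using hk
    rcases hjk.lt_or_gt with h | h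
    · exact hdis' j hj k hk h
    · exact (hdis' k hk j hj h).symm
  have hvol : ∀ k, volume (T k) = ENNReal.ofReal (sin a / 2) := by
    intro k
    rw [volume_tri_cis _ _ (by linarith [hstep k]) (by rw [hstep]; exact haπ.le), hstep]
  calc ENNReal.ofReal ((n : ℝ) / 2 * sin a)
      = ∑ k ∈ Finset.range n, volume (T k) := by
        simp only [hvol, Finset.sum_const, Finset.card_range, nsmul_eq_mul]
        rw [← ENNReal.ofReal_natCast, ← ENNReal.ofReal_mul (by positivity)]
        congr 1; ring
    _ = volume (⋃ k ∈ Finset.range n, T k) :=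
        (measure_biUnion_finset₀ hdis fun k _ => (convex_tri _ _).nullMeasurableSet volume).symm
    _ ≤ _ := measure_mono hsub

/-- Among `n` points of the closed unit disk, the area of the convex hull is at most
`(n/2)·sin(2π/n)`, with equality for the vertices of the regular inscribed `n`-gon. -/
theorem stmt14 (n : ℕ) (hn : 3 ≤ n) (x : Fin n → ℂ) (hx : ∀ i, ‖x i‖ ≤ 1) :
    hullArea x ≤ (n : ℝ) / 2 * Real.sin (2 * π / n) ∧
      hullArea (regularVertices n) = (n : ℝ) / 2 * Real.sin (2 * π / n) := by
  have hn' : (3 : ℝ) ≤ n := by exact_mod_cast hn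
  have hnn : 0 ≤ (n : ℝ) / 2 * sin (2 * π / n) := by
    have := sin_nonneg_of_nonneg_of_le_pi (x := 2 * π / n) (by positivity)
      (by rw [div_le_iff₀ (by linarith)]; nlinarith [pi_pos])
    positivity
  refine ⟨ENNReal.toReal_le_of_le_ofReal hnn (upper hn hx), ?_⟩
  have hreg : ∀ i, ‖regularVertices n i‖ ≤ 1 := fun i => by
    rw [regularVertices, Complex.norm_exp_ofReal_mul_I]
  rw [hullArea, le_antisymm (upper hn hreg) (lower hn), ENNReal.toReal_ofReal hnn]
end
end

section
/- Let m ≥ 2, β > −1, C > 0, and fix angles θ_2,…,θ_m ∈ [0,2π). Let U_1,…,U_m be i.i.d. random points in ℝ² with the beta distribution with parameter β. Then there exists a constant C' > 0 such that for all ε ∈ (0,1): P[ 1 − ‖U_i‖ ≤ C·ε for all i = 1,…,m, and |φ_i − θ_i| ≤ C·√ε for all i = 2,…,m ] ≤ C' · ε^{(m−1)/2 + m(β+1)}, where φ_i ∈ [0,2π) is the counterclockwise angle at the origin from U_1 to U_i. -/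
/-!
Fix `s = √ε` and cut the circle of directions of `U_1` into `O(1/s)` arcs `[j s, (j+1) s)`.
If the direction of `U_1` lies in the `j`-th arc, then the direction of each `U_i` lies, modulo `2π`,
within `(C+1) s` of the fixed angle `j s + θ_i` (with `θ_1 = 0`). Hence, off the null event that some
`U_i` vanishes, the event is covered by `O(1/s)` product sets, and each factor is an annular
sector of radial width `O(ε)` and angular width `O(s)`. In polar coordinates
(`betaMeasure_sector_le`) such a sector has measure `O(ε ^ (β+1) · s)`, since
`r ↦ -(1-r²)^(β+1)/(2π)` is a primitive of the radial density (`lintegral_radial_le`).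
The union bound gives `O(s⁻¹ (ε ^ (β+1) s) ^ m)`, which is the claimed order. The covering replaces
conditioning on `U_1`, so that no Fubini argument for the joint law is needed.
-/

open MeasureTheory Real Filter Topology

noncomputable section

/-- The beta distribution with parameter `β > -1` on the plane (identified with `ℂ`):
the measure with Lebesgue density `((β+1)/π) (1-‖x‖²)^β` on the unit disk. -/
def betaMeasure (β : ℝ) : Measure ℂ :=
  volume.withDensity fun z =>
    ENNReal.ofReal (if ‖z‖ ≤ 1 then ((β + 1) / π) * (1 - ‖z‖ ^ 2) ^ β else 0)

/-- The counterclockwise angle at the origin from `z` to `w`, normalized to `[0, 2π)`. -/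
def angleCCW (z w : ℂ) : ℝ :=
  if 0 ≤ (w / z).arg then (w / z).arg else (w / z).arg + 2 * π

/-- Distance between two angles modulo `2π`. -/
def circDist (a b : ℝ) : ℝ := min |a - b| (2 * π - |a - b|)

/-! ### Measure of an annular sector -/

/-- The radial mass of the annulus of width `t`. For `β < 0` the density is unbounded at `r = 1`;
integrability comes from its being the nonnegative derivative of a function continuous up to `1`. -/
lemma lintegral_radial_le {β : ℝ} (hβ : -1 < β) {t : ℝ} (ht : 0 < t) :
    ∫⁻ r in Set.Icc (max 0 (1 - t)) 1, ENNReal.ofReal (r * (((β + 1) / π) * (1 - r ^ 2) ^ β))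
      ≤ ENNReal.ofReal ((2 * t) ^ (β + 1)) := by
  set a := max 0 (1 - t) with ha
  have ha0 : 0 ≤ a := le_max_left _ _
  have hat : 1 - t ≤ a := le_max_right _ _
  have ha1 : a ≤ 1 := max_le zero_le_one (by linarith)
  have hb : 0 < β + 1 := by linarith
  have hcont : ContinuousOn (fun r : ℝ => -((1 - r ^ 2) ^ (β + 1)) / (2 * π)) (Set.Icc a 1) := by
    refine ContinuousOn.div_const (ContinuousOn.neg ?_) _
    exact ContinuousOn.rpow_const (by fun_prop) (fun x _ => Or.inr hb.le)
  have hder : ∀ x ∈ Set.Ioo a 1, HasDerivAt (fun r : ℝ => -((1 - r ^ 2) ^ (β + 1)) / (2 * π))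
      (x * (((β + 1) / π) * (1 - x ^ 2) ^ β)) x := by
    intro x hx
    have hx0 : 0 < x := lt_of_le_of_lt ha0 hx.1
    have h1 : (1 - x ^ 2) ≠ 0 := by nlinarith [hx.2]
    have h2 : HasDerivAt (fun r : ℝ => 1 - r ^ 2) (-(2 * x)) x := by
      simpa using ((hasDerivAt_pow 2 x).const_sub 1)
    have h3 := ((h2.rpow_const (p := β + 1) (Or.inl h1)).neg).div_const (2 * π)
    refine h3.congr_deriv ?_
    rw [add_sub_cancel_right]
    field_simp
  have hnn : ∀ x ∈ Set.Ioo a 1, 0 ≤ x * (((β + 1) / π) * (1 - x ^ 2) ^ β) := by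
    intro x hx
    have hx0 : 0 < x := lt_of_le_of_lt ha0 hx.1
    have h1 : 0 ≤ (1 - x ^ 2) := by nlinarith [hx.2]
    have := Real.rpow_nonneg h1 β
    exact mul_nonneg hx0.le (mul_nonneg (by positivity) this)
  have hint := intervalIntegral.integrableOn_deriv_of_nonneg hcont hder hnn
  have hI : ∫ x in a..1, x * (((β + 1) / π) * (1 - x ^ 2) ^ β) = (1 - a ^ 2) ^ (β + 1) / (2 * π) := by
    rw [intervalIntegral.integral_eq_sub_of_hasDerivAt_of_le ha1 hcont hder
      ((intervalIntegrable_iff_integrableOn_Ioc_of_le ha1).2 hint)]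
    simp [Real.zero_rpow hb.ne']
    ring
  rw [intervalIntegral.integral_of_le ha1, MeasureTheory.integral_Ioc_eq_integral_Ioo] at hI
  rw [setLIntegral_congr Ioo_ae_eq_Icc.symm,
    ← ofReal_integral_eq_lintegral_ofReal (hint.mono_set Set.Ioo_subset_Ioc_self)
      ((ae_restrict_iff' measurableSet_Ioo).2 (ae_of_all _ hnn)), hI]
  apply ENNReal.ofReal_le_ofReal
  have h0 : 0 ≤ 1 - a ^ 2 := by nlinarith
  have h1 : (1 - a ^ 2) ^ (β + 1) ≤ (2 * t) ^ (β + 1) :=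
    Real.rpow_le_rpow h0 (by nlinarith) hb.le
  have h2 : 0 ≤ (1 - a ^ 2) ^ (β + 1) := Real.rpow_nonneg h0 _
  refine le_trans (div_le_self h2 ?_) h1
  linarith [Real.pi_gt_three]

lemma measurable_betaDensity (β : ℝ) : Measurable fun z : ℂ =>
    (if ‖z‖ ≤ 1 then ((β + 1) / π) * (1 - ‖z‖ ^ 2) ^ β else 0 : ℝ) := by
  refine Measurable.ite (measurableSet_le measurable_norm measurable_const) ?_ measurable_const
  exact ((measurable_const.sub (measurable_norm.pow_const 2)).pow_const β).const_mul _

/-- Points of radius above `1` satisfy the condition `1 - ‖z‖ ≤ t` too, but carry no mass. -/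
lemma betaMeasure_sector_le {β : ℝ} (hβ : -1 < β) {t : ℝ} (ht : 0 < t) {T : Set ℝ}
    (hT : MeasurableSet T) :
    betaMeasure β {z | 1 - ‖z‖ ≤ t ∧ z.arg ∈ T} ≤ ENNReal.ofReal ((2 * t) ^ (β + 1)) * volume T := by
  have hS : MeasurableSet {z : ℂ | 1 - ‖z‖ ≤ t ∧ z.arg ∈ T} :=
    (measurableSet_le (measurable_const.sub measurable_norm) measurable_const).inter
      (Complex.measurable_arg hT)
  set f : ℝ → ENNReal := (Set.Icc (max 0 (1 - t)) 1).indicator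
    fun r => ENNReal.ofReal (r * (((β + 1) / π) * (1 - r ^ 2) ^ β)) with hf
  have hfm : Measurable f := by
    refine Measurable.indicator ?_ measurableSet_Icc
    exact (measurable_id.mul (((measurable_const.sub (measurable_id.pow_const 2)).pow_const
      β).const_mul _)).ennreal_ofReal
  have hgm : Measurable (T.indicator (1 : ℝ → ENNReal)) := measurable_one.indicator hT
  rw [betaMeasure, withDensity_apply _ hS, ← lintegral_indicator hS,
    ← Complex.lintegral_comp_polarCoord_symm]
  calc _ ≤ ∫⁻ p : ℝ × ℝ in polarCoord.target, f p.1 * T.indicator 1 p.2 := by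
        refine setLIntegral_mono' polarCoord.open_target.measurableSet ?_
        rintro ⟨r, φ⟩ ⟨hr, hφ⟩
        simp only [Set.mem_Ioi] at hr
        have hn : ‖Complex.polarCoord.symm (r, φ)‖ = r := by
          rw [Complex.norm_polarCoord_symm, abs_of_pos hr]
        have harg : (Complex.polarCoord.symm (r, φ)).arg = φ := by
          rw [Complex.polarCoord_symm_apply]
          push_cast
          exact Complex.arg_mul_cos_add_sin_mul_I hr ⟨hφ.1, hφ.2.le⟩
        by_cases hm : 1 - r ≤ t ∧ φ ∈ T
        · rw [Set.indicator_of_mem (by rwa [Set.mem_ofPred_eq, hn, harg]), hn]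
          by_cases h1 : r ≤ 1
          · rw [hf, Set.indicator_of_mem (by simp; exact ⟨⟨hr.le, by linarith [hm.1]⟩, h1⟩),
              Set.indicator_of_mem hm.2, if_pos h1, smul_eq_mul, ENNReal.ofReal_mul hr.le]
            simp
          · simp [h1]
        · rw [Set.indicator_of_notMem (by rwa [Set.mem_ofPred_eq, hn, harg])]
          simp
    _ ≤ ∫⁻ p : ℝ × ℝ, f p.1 * T.indicator 1 p.2 := setLIntegral_le_lintegral _ _
    _ = (∫⁻ r, f r) * ∫⁻ φ, T.indicator 1 φ := by
        rw [← lintegral_prod_mul hfm.aemeasurable hgm.aemeasurable]; rfl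
    _ ≤ _ := by
        rw [lintegral_indicator_one hT, hf, lintegral_indicator measurableSet_Icc]
        gcongr
        exact lintegral_radial_le hβ ht

/-! ### Angles modulo `2π` -/

/-- The angles within `δ` of `α + 2πk` for some `|k| ≤ N`. Bounding `k` keeps the measure finite;
a sufficiently large `N` loses no angle of `(-π, π]`. -/
def arcs (N : ℕ) (α δ : ℝ) : Set ℝ :=
  ⋃ k ∈ Finset.Icc (-(N : ℤ)) N, Set.Icc (α + 2 * π * k - δ) (α + 2 * π * k + δ)

lemma measurableSet_arcs (N : ℕ) (α δ : ℝ) : MeasurableSet (arcs N α δ) :=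
  Finset.measurableSet_biUnion _ fun _ _ => measurableSet_Icc

lemma volume_arcs_le (N : ℕ) (α δ : ℝ) :
    volume (arcs N α δ) ≤ ENNReal.ofReal ((2 * N + 1) * (2 * δ)) := by
  refine (measure_biUnion_finset_le _ _).trans ?_
  have : ∀ k : ℤ, α + 2 * π * k + δ - (α + 2 * π * k - δ) = 2 * δ := fun k => by ring
  simp only [Real.volume_Icc, this, Finset.sum_const, Int.card_Icc, nsmul_eq_mul]
  rw [ENNReal.ofReal_mul (p := 2 * (N : ℝ) + 1) (by positivity)]
  gcongr
  rw [← ENNReal.ofReal_natCast]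
  apply ENNReal.ofReal_le_ofReal
  have : ((N : ℤ) + 1 - -(N : ℤ)).toNat = 2 * N + 1 := by omega
  rw [this]; push_cast; rfl

/-- The points must be nonzero: `Complex.arg 0 = 0` and `w / 0 = 0` break additivity of `arg`. -/
lemma exists_arg_sub_of_circDist {z w : ℂ} (hz : z ≠ 0) (hw : w ≠ 0) {θ d : ℝ}
    (hθ : θ ∈ Set.Ico 0 (2 * π)) (h : circDist (angleCCW z w) θ ≤ d) :
    ∃ k : ℤ, |w.arg - z.arg - θ - 2 * π * k| ≤ d := by
  obtain ⟨k₁, hk₁⟩ : ∃ k : ℤ, angleCCW z w = w.arg - z.arg + 2 * π * k := by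
    have h1 : ((w / z).arg : Real.Angle) = ((w.arg - z.arg : ℝ) : Real.Angle) := by
      rw [Complex.arg_div_coe_angle hw hz]; rfl
    obtain ⟨k, hk⟩ := Real.Angle.angle_eq_iff_two_pi_dvd_sub.1 h1
    unfold angleCCW
    split_ifs
    · exact ⟨k, by linarith⟩
    · exact ⟨k + 1, by push_cast; linarith⟩
  have hr : 0 ≤ angleCCW z w ∧ angleCCW z w < 2 * π := by
    have h1 := Complex.neg_pi_lt_arg (w / z)
    have h2 := Complex.arg_le_pi (w / z)
    have h3 := Real.pi_pos
    unfold angleCCW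
    split_ifs <;> constructor <;> linarith
  obtain ⟨hθ0, hθ1⟩ := hθ
  unfold circDist at h
  rcases min_le_iff.1 h with h | h
  · exact ⟨-k₁, by rw [hk₁] at h; rwa [show w.arg - z.arg - θ - 2 * π * ((-k₁ : ℤ) : ℝ) =
        w.arg - z.arg + 2 * π * k₁ - θ by push_cast; ring]⟩
  · rcases le_total 0 (angleCCW z w - θ) with h0 | h0
    · rw [abs_of_nonneg h0] at h
      refine ⟨1 - k₁, ?_⟩
      push_cast
      rw [abs_le]
      constructor <;> linarith
    · rw [abs_of_nonpos h0] at h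
      refine ⟨-1 - k₁, ?_⟩
      push_cast
      rw [abs_le]
      constructor <;> linarith

/-- Near-equality modulo `2π` puts an argument in `arcs N α δ` once `N` exceeds every winding number
that the size of `α` and `δ` allows. -/
lemma arg_mem_arcs {z : ℂ} {N : ℕ} {α δ : ℝ} {k : ℤ} (h : |z.arg - α - 2 * π * k| ≤ δ)
    (hN : π + |α| + δ ≤ 2 * π * N) : z.arg ∈ arcs N α δ := by
  have h1 := Complex.abs_arg_le_pi z
  rw [abs_le] at h h1
  have hα := abs_le.1 (le_refl |α|)
  have hπ := Real.pi_pos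
  have hk1 : (k : ℝ) ≤ N := by
    by_contra! hc
    nlinarith
  have hk2 : (-(N : ℝ)) ≤ k := by
    by_contra! hc
    nlinarith
  simp only [arcs, Set.mem_iUnion]
  refine ⟨k, Finset.mem_Icc.2 ⟨by exact_mod_cast hk2, by exact_mod_cast hk1⟩, ?_, ?_⟩ <;> linarith

/-! ### Covering by product sets and the union bound -/

instance (β : ℝ) : SigmaFinite (betaMeasure β) :=
  SigmaFinite.withDensity_ofReal _

lemma pi_betaMeasure_exists_eq_zero (m : ℕ) (β : ℝ) :
    (Measure.pi fun _ : Fin m => betaMeasure β) {U | ∃ i, U i = 0} = 0 := by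
  rw [Set.ofPred_exists, measure_iUnion_null_iff]
  intro i
  have h0 : betaMeasure β {0} = 0 :=
    withDensity_absolutelyContinuous _ _ (measure_singleton 0)
  exact Measure.pi_eval_preimage_null (fun _ : Fin m => betaMeasure β) h0

/-- The center of the `i`-th direction relative to that of `U_1`: zero for the first point,
and the prescribed angle for the others. -/
def offset {m : ℕ} (θ : Fin (m - 1) → ℝ) (i : Fin m) : ℝ :=
  if h : (i : ℕ) = 0 then 0 else θ ⟨i - 1, by omega⟩

lemma abs_offset_le {m : ℕ} {θ : Fin (m - 1) → ℝ} (hθ : ∀ l, θ l ∈ Set.Ico 0 (2 * π)) (i : Fin m) :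
    |offset θ i| ≤ 2 * π := by
  unfold offset
  split_ifs
  · simp [Real.pi_pos.le]
  · rw [abs_of_nonneg (hθ _).1]; exact (hθ _).2.le

/-- Covering of the event, off the null set, by boxes indexed by the arc containing `arg U_1`.
Here `i₀` is the index of `U_1` and `σ` enumerates the remaining indices. -/
lemma event_subset {m : ℕ} {C s t : ℝ} (hC : 0 < C)
    {θ : Fin (m - 1) → ℝ} (hθ : ∀ l, θ l ∈ Set.Ico 0 (2 * π)) (hs : 0 < s) (hs1 : s ≤ 1)
    {i₀ : Fin m} (hi₀ : (i₀ : ℕ) = 0) {σ : Fin (m - 1) → Fin m} (hσ : ∀ l, (σ l : ℕ) = l + 1)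
    {N M : ℕ} (hN : C + 4 ≤ N) (hM : 4 / s + 1 ≤ M) :
    {U : Fin m → ℂ | (∀ i, 1 - ‖U i‖ ≤ t) ∧ (∀ l : Fin (m - 1),
      circDist (angleCCW (U i₀) (U (σ l))) (θ l) ≤ C * s)} ⊆
    {U | ∃ i, U i = 0} ∪ ⋃ j ∈ Finset.Icc (-(M : ℤ)) M, Set.univ.pi fun i =>
      {z : ℂ | 1 - ‖z‖ ≤ t ∧ z.arg ∈ arcs N (j * s + offset θ i) ((C + 1) * s)} := by
  rintro U ⟨hU, hφ⟩
  by_cases h0 : ∃ i, U i = 0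
  · exact Or.inl h0
  right
  push Not at h0
  set x := (U i₀).arg with hx
  have hxπ : |x| ≤ π := Complex.abs_arg_le_pi _
  have hπ := Real.pi_gt_three
  have hπ4 := Real.pi_le_four
  rw [abs_le] at hxπ
  set j := ⌊x / s⌋ with hj
  have hj1 : j * s ≤ x := (le_div_iff₀ hs).1 (Int.floor_le _)
  have hj2 : x < (j + 1) * s := (div_lt_iff₀ hs).1 (Int.lt_floor_add_one _)
  have hMs : 4 + s ≤ M * s := by
    have := mul_le_mul_of_nonneg_right hM hs.le
    rwa [add_mul, one_mul, div_mul_cancel₀ _ hs.ne'] at this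
  have hjM : (j : ℝ) ≤ M := le_of_mul_le_mul_right (by linarith) hs
  have hjM' : (-(M : ℝ)) ≤ j := le_of_mul_le_mul_right (by linarith) hs
  simp only [Set.mem_iUnion]
  refine ⟨j, Finset.mem_Icc.2 ⟨by exact_mod_cast hjM', by exact_mod_cast hjM⟩, fun i _ => ⟨hU i, ?_⟩⟩
  have hjs : |(j : ℝ) * s| ≤ π + 1 := abs_le.2 ⟨by linarith, by linarith⟩
  have hk : ∃ k : ℤ, |(U i).arg - (j * s + offset θ i) - 2 * π * k| ≤ (C + 1) * s := by
    have hCs : 0 < C * s := by positivity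
    by_cases hi : (i : ℕ) = 0
    · refine ⟨0, ?_⟩
      have : i = i₀ := Fin.ext (hi.trans hi₀.symm)
      rw [offset, dif_pos hi, this, ← hx, abs_le]
      constructor <;> push_cast <;> linarith
    · have hi' : σ ⟨(i : ℕ) - 1, by omega⟩ = i := Fin.ext (by rw [hσ]; simp; omega)
      have h := hφ ⟨(i : ℕ) - 1, by omega⟩
      rw [hi'] at h
      obtain ⟨k, hk⟩ := exists_arg_sub_of_circDist (h0 _) (h0 _) (hθ _) h
      refine ⟨k, ?_⟩
      rw [offset, dif_neg hi]
      rw [← hx, abs_le] at hk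
      rw [abs_le]
      constructor <;> linarith
  obtain ⟨k, hk⟩ := hk
  refine arg_mem_arcs hk ?_
  have h1 := abs_add_le ((j : ℝ) * s) (offset θ i)
  have h2 := abs_offset_le hθ i
  have h3 : (C + 1) * s ≤ C + 1 := by nlinarith
  nlinarith

/-- The small-ball estimate: for i.i.d. beta points `U_1,…,U_m` and fixed angles
`θ_2,…,θ_m ∈ [0,2π)`, the probability that all radii are `C·ε`-close to `1` and all
central angles are `C·√ε`-close (mod `2π`) to the `θ_i` is `≤ C'·ε^{(m−1)/2+m(β+1)}`. -/
theorem stmt15 (m : ℕ) (hm : 2 ≤ m) (β : ℝ) (hβ : -1 < β) (C : ℝ) (hC : 0 < C)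
    (θ : Fin (m - 1) → ℝ) (hθ : ∀ l, θ l ∈ Set.Ico 0 (2 * π)) :
    ∃ C' : ℝ, 0 < C' ∧ ∀ ε : ℝ, 0 < ε → ε < 1 →
      ((Measure.pi fun _ : Fin m => betaMeasure β)
          {U : Fin m → ℂ |
            (∀ i, 1 - ‖U i‖ ≤ C * ε) ∧
            (∀ l : Fin (m - 1),
              circDist (angleCCW (U ⟨0, by omega⟩) (U ⟨(l : ℕ) + 1, by have := l.2; omega⟩))
                (θ l) ≤ C * Real.sqrt ε)}).toReal ≤
        C' * ε ^ (((m : ℝ) - 1) / 2 + m * (β + 1)) := by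
  obtain ⟨N, hN⟩ := exists_nat_ge (C + 4)
  set A : ℝ := (2 * C) ^ (β + 1) * ((2 * N + 1) * (2 * (C + 1))) with hA
  have hA0 : 0 < A := by
    have : 0 < (2 * C) ^ (β + 1) := Real.rpow_pos_of_pos (by linarith) _
    positivity
  -- A box has measure at most `(A ε^(β+1) s)^m`, and there are `2M + 1 ≤ 15 / s` boxes.
  refine ⟨15 * A ^ m, by positivity, fun ε hε hε1 => ?_⟩
  set s := √ε with hs_def
  have hs : 0 < s := Real.sqrt_pos.2 hε
  have hs1 : s ≤ 1 := Real.sqrt_le_one.2 hε1.le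
  set M := ⌈4 / s + 1⌉₊ with hM
  have hM1 : 4 / s + 1 ≤ M := Nat.le_ceil _
  have hM2 : (2 * (M : ℝ) + 1) ≤ 15 / s := by
    have h1 : (M : ℝ) < 4 / s + 1 + 1 := Nat.ceil_lt_add_one (by positivity)
    have h2 : 1 ≤ 1 / s := by rw [le_div_iff₀ hs]; linarith
    have h3 : 4 / s = 4 * (1 / s) := by ring
    have h4 : 15 / s = 15 * (1 / s) := by ring
    linarith
  have hbox : ∀ j : ℤ, (Measure.pi fun _ : Fin m => betaMeasure β) (Set.univ.pi fun i =>
      {z : ℂ | 1 - ‖z‖ ≤ C * ε ∧ z.arg ∈ arcs N (j * s + offset θ i) ((C + 1) * s)}) ≤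
      ENNReal.ofReal ((A * ε ^ (β + 1) * s) ^ m) := by
    intro j
    rw [Measure.pi_pi]
    calc _ ≤ ∏ _i : Fin m, ENNReal.ofReal (A * ε ^ (β + 1) * s) := by
          refine Finset.prod_le_prod' fun i _ => ?_
          refine (betaMeasure_sector_le hβ (by positivity) (measurableSet_arcs _ _ _)).trans ?_
          refine (mul_le_mul_right (volume_arcs_le N _ _) _).trans_eq ?_
          rw [← ENNReal.ofReal_mul (Real.rpow_nonneg (by positivity) _), ← mul_assoc 2 C ε,
            Real.mul_rpow (by positivity) hε.le, hA]
          congr 1; ring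
      _ = _ := by
          rw [Finset.prod_const, Finset.card_univ, Fintype.card_fin,
            ENNReal.ofReal_pow (mul_nonneg (by positivity) hs.le)]
  have hpos : 0 ≤ (A * ε ^ (β + 1) * s) ^ m := by positivity
  refine ENNReal.toReal_le_of_le_ofReal (by positivity) ?_
  refine (measure_mono (event_subset hC hθ hs hs1 rfl (fun _ => rfl) hN hM1)).trans ?_
  refine (measure_union_le _ _).trans ?_
  rw [pi_betaMeasure_exists_eq_zero, zero_add]
  refine (measure_biUnion_finset_le _ _).trans ?_
  refine (Finset.sum_le_sum fun j _ => hbox j).trans ?_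
  have hcard : ((M : ℤ) + 1 - -(M : ℤ)).toNat = 2 * M + 1 := by omega
  rw [Finset.sum_const, Int.card_Icc, hcard, nsmul_eq_mul, ← ENNReal.ofReal_natCast,
    ← ENNReal.ofReal_mul (by positivity)]
  apply ENNReal.ofReal_le_ofReal
  push_cast
  refine (mul_le_mul_of_nonneg_right hM2 hpos).trans_eq ?_
  have hsr : s = ε ^ (1 / 2 : ℝ) := Real.sqrt_eq_rpow ε
  have hexp : ((m : ℝ) - 1) / 2 + m * (β + 1) = (β + 1) * m + 1 / 2 * m - 1 / 2 := by ring
  rw [hexp, Real.rpow_sub hε, Real.rpow_add hε ((β + 1) * m), Real.rpow_mul hε.le, Real.rpow_mul hε.le, ← hsr,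
    Real.rpow_natCast, Real.rpow_natCast, mul_pow, mul_pow]
  ring
end
end
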